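/- arXiv:2602.01847 — 2 statements merged into one kernel-verified Lean document; each statement's English description precedes it below -/
import Mathlib

section
/- Let H=(V_H,E_H) be a fixed graph with at least one edge, P a strict partial order on E_H, let ψ be the Bernoulli distribution with mean r (P[Q=1]=r=1−P[Q=0], 0<r≤1), 0<δ<1, and 𝒢 a sample from Γ_{[n]}(ψ). Let N_δ be the number of δ-temporal occurrences of (H,P) in 𝒢, i.e. the number of injective maps φ:V_H→[n] such that every edge φ(e), e∈E_H, carries a label and these |E_H| labels all lie within an interval of length δ and satisfy the order P under φ. Then Var[N_δ] ≤ (√2·δ·r)^{2|E_H|}·(1 + |E_H|(1−δ)/δ)·n^{2|V_H|}·(2|V_H|)^{2|V_H|}·Σ_{I⊆H, |E_I|≥1} (2δr)^{−|E_I|}·n^{−|V_I|}, where the sum ranges over isomorphism classes of subgraphs I=(V_I,E_I) of H with at least one edge. -/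
open MeasureTheory ProbabilityTheory Filter Set
open scoped ENNReal NNReal Topology

noncomputable section

namespace RTG

/-- A temporal graph on vertex type `V`, given by the finite set of real time labels
attached to each potential edge (unordered pair of vertices). -/
abbrev TGraph (V : Type*) := Sym2 V → Finset ℝ

/-- `P` is a strict partial order supported on the set `s`. -/
def StrictPartialOrderOn {α : Type*} (s : Set α) (P : α → α → Prop) : Prop :=
  (∀ a, ¬ P a a) ∧ (∀ a b c, P a b → P b c → P a c) ∧ ∀ a b, P a b → a ∈ s ∧ b ∈ s

/-- The temporal graph `Λ` contains `(H, P)` as a `δ`-temporal motif. -/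
def Contains {VH V : Type*} (H : SimpleGraph VH) (P : Sym2 VH → Sym2 VH → Prop)
    (Λ : TGraph V) (δ : ℝ) : Prop :=
  ∃ Φ : VH → V, Function.Injective Φ ∧
    ∃ lab : Sym2 VH → ℝ,
      (∀ e ∈ H.edgeSet, lab e ∈ Λ (Sym2.map Φ e)) ∧
      (∀ e f, P e f → lab e < lab f) ∧
      (∀ e ∈ H.edgeSet, ∀ f ∈ H.edgeSet, lab e - lab f < δ)

/-- The sparsity `ρ_H` of a graph `H`: the minimum over subgraphs with at least two
edges of `|V_I| / (|E_I| - 1)`. -/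
def sparsity {VH : Type*} (H : SimpleGraph VH) : ℝ :=
  sInf {x : ℝ | ∃ I : H.Subgraph, 2 ≤ I.edgeSet.ncard ∧
    x = (I.verts.ncard : ℝ) / ((I.edgeSet.ncard : ℝ) - 1)}

/-- The space of label data on a single edge: a number `k` of labels together with the
tuple of `k` label values (indexed in order of sampling). -/
abbrev LabelSpace := Σ k : ℕ, Fin k → ℝ

/-- The uniform distribution on `(0, 1]`. -/
def unif01 : Measure ℝ := volume.restrict (Set.Ioc 0 1)

/-- The uniform distribution on `{1, …, T}` (as a measure on `ℝ`). -/
def unifDisc (T : ℕ) : Measure ℝ :=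
  (T : ℝ≥0∞)⁻¹ • ∑ k ∈ Finset.Icc 1 T, Measure.dirac (k : ℝ)

/-- The distribution of the label data of a single edge: the number of labels is drawn
according to `ψ` and, independently, each label value is drawn according to `ν`. -/
def edgeMeasure (ν : Measure ℝ) (ψ : Measure ℕ) : Measure LabelSpace :=
  Measure.sum fun k => ψ {k} • (Measure.pi fun _ : Fin k => ν).map (Sigma.mk k)

/-- The doubly random temporal graph model on vertex set `V` with label value
distribution `ν` and label multiplicity distribution `ψ`: all edges receive independent
identically distributed label data. -/
def model (V : Type*) [Fintype V] [DecidableEq V] (ν : Measure ℝ) (ψ : Measure ℕ) :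
    Measure (Sym2 V → LabelSpace) :=
  Measure.pi fun _ : Sym2 V => edgeMeasure ν ψ

/-- The continuous doubly random temporal graph `Γ_V(ψ)`. -/
abbrev contModel (V : Type*) [Fintype V] [DecidableEq V] (ψ : Measure ℕ) :
    Measure (Sym2 V → LabelSpace) := model V unif01 ψ

/-- The discrete doubly random temporal graph `Γ_V(ψ, T)`. -/
abbrev discModel (V : Type*) [Fintype V] [DecidableEq V] (ψ : Measure ℕ) (T : ℕ) :
    Measure (Sym2 V → LabelSpace) := model V (unifDisc T) ψ

/-- The temporal graph determined by a sample `ω` of the model: each non-loop edge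
carries the sampled set of labels. -/
def toTGraph {V : Type*} [DecidableEq V] (ω : Sym2 V → LabelSpace) : TGraph V :=
  fun e => if e.IsDiag then ∅ else Finset.image (ω e).2 Finset.univ

/-- The `T`-discretization of a temporal graph: each label `l` is replaced by `⌈T·l⌉`. -/
def discretize {V : Type*} (T : ℕ) (Λ : TGraph V) : TGraph V :=
  fun e => (Λ e).image fun l => ((⌈(T : ℝ) * l⌉ : ℤ) : ℝ)

/-- `ψ` is a label multiplicity distribution: a probability distribution on `ℕ` with
positive finite mean and finite second moment. -/
def IsLMD (ψ : Measure ℕ) : Prop :=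
  IsProbabilityMeasure ψ ∧ Integrable (fun k : ℕ => (k : ℝ)) ψ ∧
    Integrable (fun k : ℕ => (k : ℝ) ^ 2) ψ ∧ 0 < ∫ k, (k : ℝ) ∂ψ

/-- The mean `r` of a label multiplicity distribution. -/
def lmdMean (ψ : Measure ℕ) : ℝ := ∫ k, (k : ℝ) ∂ψ

/-- The second moment `r₂` of a label multiplicity distribution. -/
def lmdSq (ψ : Measure ℕ) : ℝ := ∫ k, (k : ℝ) ^ 2 ∂ψ

/-- `q = P[Q > 0]` for a label multiplicity distribution. -/
def lmdPos (ψ : Measure ℕ) : ℝ := (ψ {k | 0 < k}).toReal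

/-- `v` is reachable from the set `S` by time `t` in the temporal graph `Λ`. -/
def ReachBy {V : Type*} (Λ : TGraph V) (S : Set V) (t : ℝ) (v : V) : Prop :=
  v ∈ S ∨ ∃ (k : ℕ) (f : ℕ → V) (ts : ℕ → ℝ), 0 < k ∧ f 0 ∈ S ∧ f k = v ∧
    (∀ i < k, ts i ∈ Λ s(f i, f (i + 1))) ∧
    (∀ i j, i < j → j < k → ts i < ts j) ∧ ts (k - 1) ≤ t

/-- The reachability ball `B_Λ(S, t)`. -/
def ball {V : Type*} (Λ : TGraph V) (S : Set V) (t : ℝ) : Set V := {v | ReachBy Λ S t v}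

/-- The doubling time of the set `S` in `Λ` (with value `∞` if the reachability ball
never doubles in size). -/
def doubleTime {V : Type*} (Λ : TGraph V) (S : Set V) : ℝ≥0∞ :=
  ⨅ (t : ℝ) (_ : 0 ≤ t ∧ 2 * S.ncard ≤ (ball Λ S t).ncard), ENNReal.ofReal t

/-- The doubling time of the temporal graph `Λ`: the maximum doubling time over all
nonempty vertex sets of size at most half the number of vertices. -/
def doubleAll {V : Type*} [Fintype V] (Λ : TGraph V) : ℝ≥0∞ :=
  ⨆ (S : Set V) (_ : S.Nonempty ∧ 2 * S.ncard ≤ Fintype.card V), doubleTime Λ S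

/-- `Double⁻`: the maximum doubling time over nonempty sets of size at most `n/4`. -/
def doubleSmall {V : Type*} [Fintype V] (Λ : TGraph V) : ℝ≥0∞ :=
  ⨆ (S : Set V) (_ : S.Nonempty ∧ 4 * S.ncard ≤ Fintype.card V), doubleTime Λ S

/-- `Double⁺`: the maximum doubling time over sets of size in `(n/4, n/2]`. -/
def doubleLarge {V : Type*} [Fintype V] (Λ : TGraph V) : ℝ≥0∞ :=
  ⨆ (S : Set V) (_ : Fintype.card V < 4 * S.ncard ∧ 2 * S.ncard ≤ Fintype.card V),
    doubleTime Λ S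

/-- The partial reversal `ℛ(Λ, t)`: every label `l < t` is replaced by `t - l`. -/
def reverse {V : Type*} (Λ : TGraph V) (t : ℝ) : TGraph V :=
  fun e => (Λ e).image fun l => if l < t then t - l else l

/-- The rank of a time `x` among all the labels of the sample `ω`: the number of labels
(on genuine, non-loop, edges) that are at most `x`. -/
def rank {V : Type*} [Fintype V] [DecidableEq V] (ω : Sym2 V → LabelSpace) (x : ℝ) : ℕ :=
  ∑ e ∈ Finset.univ.filter (fun e : Sym2 V => ¬ e.IsDiag),
    Nat.card {i : Fin (ω e).1 // (ω e).2 i ≤ x}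

/-- The order discretization `𝒢^O` of the sample `ω`: each label is replaced by its rank
among all labels. -/
def orderDisc {V : Type*} [Fintype V] [DecidableEq V] (ω : Sym2 V → LabelSpace) :
    TGraph V :=
  fun e => if e.IsDiag then ∅
    else Finset.image (fun i => (rank ω ((ω e).2 i) : ℝ)) Finset.univ


/-- The value of the `j`-th sampled label (0-indexed) on the edge `f` in the sample `ω`
(junk value `0` if there are not that many labels). -/
def labVal {V : Type*} (ω : Sym2 V → LabelSpace) (f : Sym2 V) (j : ℕ) : ℝ :=
  if h : j < (ω f).1 then (ω f).2 ⟨j, h⟩ else 0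

/-- The set of `δ`-temporal occurrences of `(H, P)` in the sample `ω` when each edge
carries at most one label: injective vertex maps `φ` such that every image edge carries
a label and the labels lie within an interval of length `δ` and realize `P`. -/
def bernOcc {VH : Type*} {n : ℕ} (H : SimpleGraph VH) (P : Sym2 VH → Sym2 VH → Prop)
    (δ : ℝ) (ω : Sym2 (Fin n) → LabelSpace) : Set (VH → Fin n) :=
  {φ | Function.Injective φ ∧ (∀ e ∈ H.edgeSet, 0 < (ω (Sym2.map φ e)).1) ∧
    (∀ e ∈ H.edgeSet, ∀ f ∈ H.edgeSet,
      labVal ω (Sym2.map φ e) 0 - labVal ω (Sym2.map φ f) 0 ≤ δ) ∧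
    (∀ e f, P e f → labVal ω (Sym2.map φ e) 0 < labVal ω (Sym2.map φ f) 0)}

/-!
The variance is the sum of the covariances of the occurrence events of all pairs of vertex maps,
and copies of `H` without a common edge are independent. For two copies with edge sets `A` and `B`
that share an edge `c`, condition on the edge of `A` with the smallest label: the other labels of
`A` fall within `δ` after it, so the probability that the first labels over `A` lie in a window of
length `δ` is at most `|A| ∫ min δ (1 - t) ^ (|A| - 1) dt` times a power of `r`, and each label of
`B \ A` falls within `δ` of the label of `c`, which costs a factor `2 δ r`. The shared edges form
a copy of some subgraph `I` of `H`, and at most `(2|V|)^(2|V|) n^(2|V| - |V_I|)` pairs of maps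
have at least `|V_I|` vertices in common.
-/

section ProductMeasure

variable {ι : Type*} [Fintype ι]

lemma measurePreserving_finset_piecewise [DecidableEq ι] {Ω : ι → Type*}
    [∀ i, MeasurableSpace (Ω i)] (μ : ∀ i, Measure (Ω i)) [∀ i, IsProbabilityMeasure (μ i)]
    (D : Finset ι) :
    MeasurePreserving (fun p : (∀ i, Ω i) × (∀ i, Ω i) => D.piecewise p.1 p.2)
      ((Measure.pi μ).prod (Measure.pi μ)) (Measure.pi μ) := by
  have hmeas : Measurable fun p : (∀ i, Ω i) × (∀ i, Ω i) => D.piecewise p.1 p.2 := by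
    refine measurable_pi_lambda _ fun i => ?_
    by_cases hi : i ∈ D
    · simp only [Finset.piecewise_eq_of_mem _ _ _ hi]
      fun_prop
    · simp only [Finset.piecewise_eq_of_notMem _ _ _ hi]
      fun_prop
  refine ⟨hmeas, (Measure.pi_eq fun s hs => ?_).symm⟩
  have hbox : (fun p : (∀ i, Ω i) × (∀ i, Ω i) => D.piecewise p.1 p.2) ⁻¹' univ.pi s
      = (D : Set ι).pi s ×ˢ ((Dᶜ : Finset ι) : Set ι).pi s := by
    ext p
    simp only [mem_preimage, mem_prod, Set.mem_pi, Finset.mem_coe, Finset.mem_compl,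
      ← forall_and]
    refine forall_congr' fun i => ?_
    by_cases hi : i ∈ D <;> simp [hi]
  rw [Measure.map_apply hmeas (MeasurableSet.univ_pi hs), hbox, Measure.prod_prod,
    Measure.pi_pi_finset, Measure.pi_pi_finset, Finset.prod_mul_prod_compl]

lemma measure_pi_inter_of_dependsOn {Ω : ι → Type*} [∀ i, MeasurableSpace (Ω i)]
    (μ : ∀ i, Measure (Ω i)) [∀ i, IsProbabilityMeasure (μ i)] {A : Finset ι}
    {E F : Set (∀ i, Ω i)} (hE : MeasurableSet E) (hF : MeasurableSet F)
    (hEA : DependsOn (· ∈ E) (A : Set ι)) (hFA : DependsOn (· ∈ F) (A : Set ι)ᶜ) :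
    Measure.pi μ (E ∩ F) = Measure.pi μ E * Measure.pi μ F := by
  classical
  have hsplit : (fun p : (∀ i, Ω i) × (∀ i, Ω i) => A.piecewise p.1 p.2) ⁻¹' (E ∩ F)
      = E ×ˢ F := by
    ext p
    exact and_congr (iff_of_eq (hEA fun i hi => A.piecewise_eq_of_mem _ _ hi))
      (iff_of_eq (hFA fun i hi => A.piecewise_eq_of_notMem _ _ hi))
  rw [← (measurePreserving_finset_piecewise μ A).measure_preimage
    (hE.inter hF).nullMeasurableSet, hsplit, Measure.prod_prod]

lemma measure_pi_inter_forall_mem {Ω : Type*} [MeasurableSpace Ω] (μ : Measure Ω)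
    [IsProbabilityMeasure μ] {D : Finset ι} {e : ι} (he : e ∉ D) {E : Set (ι → Ω)}
    (hE : MeasurableSet E) (hED : DependsOn (· ∈ E) (D : Set ι)ᶜ)
    {T : Set (Ω × Ω)} (hT : MeasurableSet T) :
    Measure.pi (fun _ => μ) (E ∩ {ω | ∀ d ∈ D, (ω e, ω d) ∈ T})
      = ∫⁻ ω in E, μ (Prod.mk (ω e) ⁻¹' T) ^ D.card ∂Measure.pi fun _ => μ := by
  classical
  have hfan : MeasurableSet (E ∩ {ω | ∀ d ∈ D, (ω e, ω d) ∈ T}) := by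
    refine hE.inter ?_
    simp only [ofPred_forall]
    exact Finset.measurableSet_biInter D fun d _ =>
      hT.preimage ((measurable_pi_apply e).prodMk (measurable_pi_apply d))
  have hmp := measurePreserving_finset_piecewise (fun _ : ι => μ) D
  rw [← hmp.measure_preimage hfan.nullMeasurableSet,
    Measure.prod_apply_symm (hmp.measurable hfan), ← lintegral_indicator hE]
  refine lintegral_congr fun ω => ?_
  have hmemE (ω' : ι → Ω) : D.piecewise ω' ω ∈ E ↔ ω ∈ E :=
    iff_of_eq (hED fun i hi => D.piecewise_eq_of_notMem _ _ hi)
  by_cases hω : ω ∈ E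
  · have hslice : (fun ω' => (ω', ω)) ⁻¹' ((fun p : (ι → Ω) × (ι → Ω) => D.piecewise p.1 p.2) ⁻¹'
        (E ∩ {ω | ∀ d ∈ D, (ω e, ω d) ∈ T})) = (D : Set ι).pi fun _ => Prod.mk (ω e) ⁻¹' T := by
      ext ω'
      simp only [mem_preimage, mem_inter_iff, hmemE, hω, true_and, mem_ofPred_eq, Set.mem_pi,
        Finset.mem_coe]
      refine forall₂_congr fun d hd => ?_
      rw [D.piecewise_eq_of_notMem _ _ he, D.piecewise_eq_of_mem _ _ hd]
    rw [hslice, Measure.pi_pi_finset, Finset.prod_const, indicator_of_mem hω]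
  · have hslice : (fun ω' => (ω', ω)) ⁻¹' ((fun p : (ι → Ω) × (ι → Ω) => D.piecewise p.1 p.2) ⁻¹'
        (E ∩ {ω | ∀ d ∈ D, (ω e, ω d) ∈ T})) = ∅ := by
      ext ω'
      simp [hmemE, hω]
    rw [hslice, measure_empty, indicator_of_notMem hω]

end ProductMeasure

section Indicators

variable {Ω : Type*} [MeasurableSpace Ω] {μ : Measure Ω}

lemma memLp_indicator_one [IsFiniteMeasure μ] {p : ℝ≥0∞} {E : Set Ω} (hE : MeasurableSet E) :
    MemLp (E.indicator (1 : Ω → ℝ)) p μ :=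
  (memLp_const (1 : ℝ)).indicator hE

lemma covariance_indicator_one [IsProbabilityMeasure μ] {E F : Set Ω} (hE : MeasurableSet E)
    (hF : MeasurableSet F) :
    cov[E.indicator 1, F.indicator 1; μ] = μ.real (E ∩ F) - μ.real E * μ.real F := by
  rw [covariance_eq_sub (memLp_indicator_one hE) (memLp_indicator_one hF), ← inter_indicator_one,
    integral_indicator_one (hE.inter hF), integral_indicator_one hE, integral_indicator_one hF]

lemma variance_ncard [IsProbabilityMeasure μ] {α : Type*} [Fintype α] {N : Ω → Set α}
    (hN : ∀ a, MeasurableSet {ω | a ∈ N ω}) :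
    Var[fun ω => ((N ω).ncard : ℝ); μ] = ∑ a, ∑ b,
      (μ.real ({ω | a ∈ N ω} ∩ {ω | b ∈ N ω}) - μ.real {ω | a ∈ N ω} * μ.real {ω | b ∈ N ω}) := by
  classical
  have hsum : (fun ω => ((N ω).ncard : ℝ)) = ∑ a, {ω | a ∈ N ω}.indicator 1 := by
    ext ω
    simp only [Finset.sum_apply, indicator_apply, mem_ofPred_eq, Pi.one_apply, Finset.sum_boole,
      ncard_eq_toFinset_card', toFinset]
    congr 2
    ext a
    simp
  rw [hsum, variance_sum fun a => memLp_indicator_one (hN a)]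
  exact Finset.sum_congr rfl fun a _ => Finset.sum_congr rfl fun b _ =>
    covariance_indicator_one (hN a) (hN b)

end Indicators

section EdgeLabels

/-- The value of the first sampled label on an edge, with junk value `0` if the edge carries no
label, so that `labVal ω f 0` is definitionally `firstLabel (ω f)`. -/
def firstLabel (x : LabelSpace) : ℝ := if h : 0 < x.1 then x.2 ⟨0, h⟩ else 0

lemma measurable_of_measurable_sigmaMk {β : Type*} [MeasurableSpace β] {f : LabelSpace → β}
    (hf : ∀ k, Measurable fun y : Fin k → ℝ => f ⟨k, y⟩) : Measurable f :=
  fun _ hs => MeasurableSpace.measurableSet_iInf.2 fun k => hf k hs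

lemma measurable_sigmaMk (k : ℕ) : Measurable fun y : Fin k → ℝ => (⟨k, y⟩ : LabelSpace) :=
  fun _ hs => MeasurableSpace.measurableSet_iInf.1 hs k

@[fun_prop]
lemma measurable_firstLabel : Measurable firstLabel := by
  refine measurable_of_measurable_sigmaMk fun k => ?_
  by_cases hk : 0 < k
  · simpa only [firstLabel, hk, dite_true] using measurable_pi_apply (⟨0, hk⟩ : Fin k)
  · simpa only [firstLabel, hk, dite_false] using measurable_const

lemma measurable_labelSpace_fst : Measurable (Sigma.fst : LabelSpace → ℕ) :=
  measurable_of_measurable_sigmaMk fun _ => measurable_const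

lemma measurableSet_labelled : MeasurableSet {x : LabelSpace | 0 < x.1} :=
  measurableSet_lt measurable_const measurable_labelSpace_fst

lemma edgeMeasure_apply (ν : Measure ℝ) (ψ : Measure ℕ) {S : Set LabelSpace}
    (hS : MeasurableSet S) :
    edgeMeasure ν ψ S
      = ∑' k, ψ {k} * (Measure.pi fun _ : Fin k => ν) {y | (⟨k, y⟩ : LabelSpace) ∈ S} := by
  rw [edgeMeasure, Measure.sum_apply _ hS]
  exact tsum_congr fun k => congrArg (ψ {k} * ·) (Measure.map_apply (measurable_sigmaMk k) hS)

instance (ν : Measure ℝ) [IsProbabilityMeasure ν] (ψ : Measure ℕ) [IsProbabilityMeasure ψ] :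
    IsProbabilityMeasure (edgeMeasure ν ψ) := by
  refine ⟨?_⟩
  rw [edgeMeasure_apply ν ψ MeasurableSet.univ, ← measure_univ (μ := ψ),
    ← ψ.tsum_indicator_apply_singleton univ MeasurableSet.univ]
  simp

lemma edgeMeasure_labelled_inter (ν : Measure ℝ) [IsProbabilityMeasure ν] (ψ : Measure ℕ)
    {S : Set ℝ} (hS : MeasurableSet S) :
    edgeMeasure ν ψ ({x | 0 < x.1} ∩ firstLabel ⁻¹' S) = ψ {k | 0 < k} * ν S := by
  rw [edgeMeasure_apply ν ψ (measurableSet_labelled.inter (measurable_firstLabel hS)),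
    ← ψ.tsum_indicator_apply_singleton {k | 0 < k} .of_discrete, ← ENNReal.tsum_mul_right]
  refine tsum_congr fun k => ?_
  rcases Nat.eq_zero_or_pos k with rfl | hk
  · simp
  · have hslice : {y | (⟨k, y⟩ : LabelSpace) ∈ {x : LabelSpace | 0 < x.1} ∩ firstLabel ⁻¹' S}
        = Function.eval (⟨0, hk⟩ : Fin k) ⁻¹' S := by
      ext y
      simp [firstLabel, hk]
    rw [hslice, (measurePreserving_eval (fun _ : Fin k => ν) ⟨0, hk⟩).measure_preimage
      hS.nullMeasurableSet, indicator_of_mem (by exact hk)]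

lemma map_firstLabel_restrict_labelled (ν : Measure ℝ) [IsProbabilityMeasure ν] (ψ : Measure ℕ) :
    ((edgeMeasure ν ψ).restrict {x | 0 < x.1}).map firstLabel = ψ {k | 0 < k} • ν := by
  ext S hS
  rw [Measure.map_apply measurable_firstLabel hS,
    Measure.restrict_apply (measurable_firstLabel hS), inter_comm,
    edgeMeasure_labelled_inter ν ψ hS, Measure.smul_apply, smul_eq_mul]

lemma measurable_measure_Icc_add (ν : Measure ℝ) [SFinite ν] (δ : ℝ) :
    Measurable fun t => ν (Icc t (t + δ)) :=
  measurable_measure_prodMk_left (s := {z : ℝ × ℝ | z.2 ∈ Icc z.1 (z.1 + δ)})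
    ((measurableSet_le measurable_fst measurable_snd).inter
      (measurableSet_le measurable_snd (by fun_prop)))

instance : IsProbabilityMeasure unif01 := ⟨by simp [unif01]⟩

lemma unif01_Icc_add {t : ℝ} (ht : t ∈ Ioc (0 : ℝ) 1) (δ : ℝ) :
    unif01 (Icc t (t + δ)) = ENNReal.ofReal (min δ (1 - t)) := by
  have hinter : Icc t (t + δ) ∩ Ioc 0 1 = Icc t (min (t + δ) 1) := by
    ext s
    simp only [mem_inter_iff, mem_Icc, mem_Ioc, le_min_iff]
    exact ⟨fun h => ⟨h.1.1, h.1.2, h.2.2⟩, fun h => ⟨⟨h.1, h.2.1⟩, ht.1.trans_le h.1, h.2.2⟩⟩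
  rw [unif01, Measure.restrict_apply measurableSet_Icc, hinter, Real.volume_Icc,
    ← min_sub_sub_right, add_sub_cancel_left]

lemma integral_min_pow {δ : ℝ} (hδ : 0 ≤ δ) (hδ1 : δ ≤ 1) (p : ℕ) :
    ∫ t in (0 : ℝ)..1, min δ (1 - t) ^ p = (1 - δ) * δ ^ p + δ ^ (p + 1) / (p + 1) := by
  have hcont : Continuous fun t : ℝ => min δ (1 - t) ^ p := by fun_prop
  have hleft : ∫ t in (0 : ℝ)..(1 - δ), min δ (1 - t) ^ p = (1 - δ) * δ ^ p := by
    rw [intervalIntegral.integral_congr (g := fun _ => δ ^ p)]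
    · simp
    · intro t ht
      rw [uIcc_of_le (by linarith)] at ht
      simp only [min_eq_left (show δ ≤ 1 - t by linarith [ht.2])]
  have hright : ∫ t in (1 - δ)..1, min δ (1 - t) ^ p = δ ^ (p + 1) / (p + 1) := by
    rw [intervalIntegral.integral_congr (g := fun t => (1 - t) ^ p)]
    · rw [intervalIntegral.integral_comp_sub_left (fun t => t ^ p) 1]
      simp [integral_pow]
    · intro t ht
      rw [uIcc_of_le (by linarith)] at ht
      simp only [min_eq_right (show 1 - t ≤ δ by linarith [ht.1])]
  rw [← intervalIntegral.integral_add_adjacent_intervals (hcont.intervalIntegrable 0 (1 - δ))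
    (hcont.intervalIntegrable _ 1), hleft, hright]

lemma lintegral_unif01_Icc_add_pow {δ : ℝ} (hδ : 0 ≤ δ) (hδ1 : δ ≤ 1) (p : ℕ) :
    ∫⁻ t, unif01 (Icc t (t + δ)) ^ p ∂unif01
      = ENNReal.ofReal ((1 - δ) * δ ^ p + δ ^ (p + 1) / (p + 1)) := by
  have hcont : Continuous fun t : ℝ => min δ (1 - t) ^ p := by fun_prop
  have hnonneg : ∀ t ∈ Ioc (0 : ℝ) 1, 0 ≤ min δ (1 - t) := fun t ht =>
    le_min hδ (sub_nonneg.2 ht.2)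
  calc ∫⁻ t, unif01 (Icc t (t + δ)) ^ p ∂unif01
      = ∫⁻ t in Ioc (0 : ℝ) 1, ENNReal.ofReal (min δ (1 - t) ^ p) :=
        setLIntegral_congr_fun measurableSet_Ioc fun t ht => by
          simp only [unif01_Icc_add ht, ENNReal.ofReal_pow (hnonneg t ht)]
    _ = ENNReal.ofReal (∫ t in (0 : ℝ)..1, min δ (1 - t) ^ p) := by
        rw [intervalIntegral.integral_of_le zero_le_one, ofReal_integral_eq_lintegral_ofReal
          (hcont.integrableOn_Icc.mono_set Ioc_subset_Icc_self)]
        exact (ae_restrict_iff' measurableSet_Ioc).2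
          (.of_forall fun t ht => pow_nonneg (hnonneg t ht) p)
    _ = _ := by rw [integral_min_pow hδ hδ1]

end EdgeLabels

section LabelClusters

/-- The pairs `(y, x)` of edge labellings such that `x` carries a label and its first label lies
within `a` before and `b` after the first label of `y`. -/
def labelWindow (a b : ℝ) : Set (LabelSpace × LabelSpace) :=
  {p | 0 < p.2.1 ∧ firstLabel p.2 ∈ Icc (firstLabel p.1 - a) (firstLabel p.1 + b)}

lemma measurableSet_labelWindow (a b : ℝ) : MeasurableSet (labelWindow a b) := by
  have hsnd : Measurable fun p : LabelSpace × LabelSpace => firstLabel p.2 := by fun_prop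
  exact (measurableSet_labelled.preimage measurable_snd).inter
    ((measurableSet_le (by fun_prop) hsnd).inter (measurableSet_le hsnd (by fun_prop)))

lemma edgeMeasure_labelWindow (ν : Measure ℝ) [IsProbabilityMeasure ν] (ψ : Measure ℕ) (a b : ℝ)
    (y : LabelSpace) :
    edgeMeasure ν ψ (Prod.mk y ⁻¹' labelWindow a b)
      = ψ {k | 0 < k} * ν (Icc (firstLabel y - a) (firstLabel y + b)) := by
  rw [← edgeMeasure_labelled_inter ν ψ measurableSet_Icc]
  rfl

variable {ι : Type*}

/-- The event that every index in `A` carries a label and that the first labels over `A` lie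
within an interval of length `δ`. -/
def labelCluster (δ : ℝ) (A : Finset ι) : Set (ι → LabelSpace) :=
  {ω | (∀ f ∈ A, 0 < (ω f).1) ∧ ∀ f ∈ A, ∀ g ∈ A, firstLabel (ω f) - firstLabel (ω g) ≤ δ}

/-- The event that `e` carries a label and that every other index in `A` carries a label at
most `δ` after it. -/
def labelStar [DecidableEq ι] (δ : ℝ) (A : Finset ι) (e : ι) : Set (ι → LabelSpace) :=
  {ω | 0 < (ω e).1} ∩ {ω | ∀ f ∈ A.erase e, (ω e, ω f) ∈ labelWindow 0 δ}

/-- A cluster over `A` is a star centred at the index of `A` with the smallest label. -/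
lemma labelCluster_inter_subset [DecidableEq ι] (δ : ℝ) {A B : Finset ι} {c : ι} (hcA : c ∈ A)
    (hcB : c ∈ B) :
    labelCluster δ A ∩ labelCluster δ B
      ⊆ ⋃ e ∈ A, labelStar δ A e ∩ {ω | ∀ d ∈ B \ A, (ω c, ω d) ∈ labelWindow δ δ} := by
  rintro ω ⟨⟨hA, hAδ⟩, hB, hBδ⟩
  obtain ⟨e, he, hmin⟩ := A.exists_min_image (fun f => firstLabel (ω f)) ⟨c, hcA⟩
  refine mem_iUnion₂.2 ⟨e, he, ⟨hA e he, fun f hf => ?_⟩, fun d hd => ?_⟩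
  · have hfA := Finset.mem_of_mem_erase hf
    exact ⟨hA f hfA, by simpa only [sub_zero] using hmin f hfA, by linarith [hAδ f hfA e he]⟩
  · have hdB := (Finset.mem_sdiff.1 hd).1
    exact ⟨hB d hdB, by linarith [hBδ c hcB d hdB], by linarith [hBδ d hdB c hcB]⟩

lemma measurableSet_labelStar [DecidableEq ι] (δ : ℝ) (A : Finset ι) (e : ι) :
    MeasurableSet (labelStar δ A e) := by
  refine (measurableSet_labelled.preimage (measurable_pi_apply e)).inter ?_
  simp only [ofPred_forall]
  exact Finset.measurableSet_biInter _ fun f _ => (measurableSet_labelWindow 0 δ).preimage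
    ((measurable_pi_apply e).prodMk (measurable_pi_apply f))

lemma dependsOn_labelStar [DecidableEq ι] (δ : ℝ) {A : Finset ι} {e : ι} (he : e ∈ A) :
    DependsOn (· ∈ labelStar δ A e) (A : Set ι) := by
  intro ω ω' h
  refine propext (and_congr (by simp [h e he]) (forall₂_congr fun f hf => ?_))
  rw [h e he, h f (Finset.mem_of_mem_erase hf)]

variable [Fintype ι] [DecidableEq ι] (ψ : Measure ℕ) [IsProbabilityMeasure ψ]

lemma measure_labelStar {δ : ℝ} (hδ : 0 ≤ δ) (hδ1 : δ ≤ 1) {A : Finset ι} {e : ι} (he : e ∈ A) :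
    Measure.pi (fun _ => edgeMeasure unif01 ψ) (labelStar δ A e)
      = ψ {k | 0 < k} ^ A.card
        * ENNReal.ofReal ((1 - δ) * δ ^ (A.card - 1) + δ ^ A.card / A.card) := by
  obtain ⟨p, hp⟩ := Nat.exists_eq_add_one_of_ne_zero (Finset.card_ne_zero_of_mem he)
  have hmeas : Measurable fun t => unif01 (Icc t (t + δ)) ^ p :=
    (measurable_measure_Icc_add unif01 δ).pow_const p
  have hmeas' : Measurable fun x => unif01 (Icc (firstLabel x) (firstLabel x + δ)) ^ p :=
    hmeas.comp measurable_firstLabel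
  have hlabelled : MeasurableSet {ω : ι → LabelSpace | 0 < (ω e).1} :=
    measurableSet_labelled.preimage (measurable_pi_apply e)
  have hdep : DependsOn (· ∈ {ω : ι → LabelSpace | 0 < (ω e).1}) (A.erase e : Set ι)ᶜ :=
    fun ω ω' h => by simp only [mem_ofPred_eq, h e (by simp)]
  calc Measure.pi (fun _ => edgeMeasure unif01 ψ) (labelStar δ A e)
      = ∫⁻ ω in {ω | 0 < (ω e).1},
          (edgeMeasure unif01 ψ (Prod.mk (ω e) ⁻¹' labelWindow 0 δ)) ^ p
            ∂Measure.pi fun _ : ι => edgeMeasure unif01 ψ := by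
        rw [labelStar, measure_pi_inter_forall_mem _ (A.notMem_erase e) hlabelled
          (by exact_mod_cast hdep) (measurableSet_labelWindow 0 δ), Finset.card_erase_of_mem he, hp,
          Nat.add_sub_cancel]
    _ = ∫⁻ x in {x | 0 < x.1}, (ψ {k | 0 < k} * unif01 (Icc (firstLabel x) (firstLabel x + δ))) ^ p
          ∂edgeMeasure unif01 ψ := by
        simp only [edgeMeasure_labelWindow, sub_zero]
        exact (measurePreserving_eval (fun _ => edgeMeasure unif01 ψ) e).setLIntegral_comp_preimage
          (f := fun x => (ψ {k | 0 < k} * unif01 (Icc (firstLabel x) (firstLabel x + δ))) ^ p)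
          measurableSet_labelled (by simpa only [mul_pow] using hmeas'.const_mul _)
    _ = ψ {k | 0 < k} ^ p * (ψ {k | 0 < k} * ∫⁻ t, unif01 (Icc t (t + δ)) ^ p ∂unif01) := by
        simp only [mul_pow]
        rw [lintegral_const_mul _ hmeas',
          ← smul_eq_mul (ψ {k | 0 < k}), ← lintegral_smul_measure,
          ← map_firstLabel_restrict_labelled, lintegral_map hmeas measurable_firstLabel]
    _ = _ := by
        rw [lintegral_unif01_Icc_add_pow hδ hδ1, hp, ← mul_assoc, ← pow_succ, Nat.add_sub_cancel]
        push_cast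
        rfl

lemma unif01_Icc_le (t δ : ℝ) : unif01 (Icc (t - δ) (t + δ)) ≤ ENNReal.ofReal (2 * δ) := by
  refine (Measure.restrict_apply_le _ _).trans_eq ?_
  rw [Real.volume_Icc]
  ring_nf

lemma measure_labelStar_inter_le (δ : ℝ) {A D : Finset ι} (hAD : Disjoint A D) {c e : ι}
    (hc : c ∈ A) (he : e ∈ A) :
    Measure.pi (fun _ => edgeMeasure unif01 ψ)
        (labelStar δ A e ∩ {ω | ∀ d ∈ D, (ω c, ω d) ∈ labelWindow δ δ})
      ≤ (ψ {k | 0 < k} * ENNReal.ofReal (2 * δ)) ^ D.card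
        * Measure.pi (fun _ => edgeMeasure unif01 ψ) (labelStar δ A e) := by
  have hdep : DependsOn (· ∈ labelStar δ A e) (D : Set ι)ᶜ :=
    (dependsOn_labelStar δ he).mono (Finset.disjoint_coe.2 hAD).subset_compl_right
  rw [measure_pi_inter_forall_mem _ (Finset.disjoint_left.1 hAD hc)
    (measurableSet_labelStar δ A e) hdep (measurableSet_labelWindow δ δ), ← setLIntegral_const]
  gcongr with ω
  rw [edgeMeasure_labelWindow]
  gcongr
  exact unif01_Icc_le _ δ

lemma measureReal_labelCluster_inter_le {δ : ℝ} (hδ : 0 < δ) (hδ1 : δ ≤ 1) {A B : Finset ι}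
    (hAB : (A ∩ B).Nonempty) :
    (Measure.pi fun _ => edgeMeasure unif01 ψ).real (labelCluster δ A ∩ labelCluster δ B)
      ≤ (δ * lmdPos ψ) ^ A.card * (1 + A.card * (1 - δ) / δ)
        * (2 * δ * lmdPos ψ) ^ (B \ A).card := by
  obtain ⟨c, hc⟩ := hAB
  obtain ⟨hcA, hcB⟩ := Finset.mem_inter.1 hc
  obtain ⟨p, hp⟩ := Nat.exists_eq_add_one_of_ne_zero (Finset.card_ne_zero_of_mem hcA)
  have hq : ψ {k | 0 < k} = ENNReal.ofReal (lmdPos ψ) :=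
    (ENNReal.ofReal_toReal (measure_ne_top ψ _)).symm
  have hq0 : 0 ≤ lmdPos ψ := ENNReal.toReal_nonneg
  have : 0 ≤ 1 - δ := sub_nonneg.2 hδ1
  refine ENNReal.toReal_le_of_le_ofReal (by positivity) ?_
  calc Measure.pi (fun _ => edgeMeasure unif01 ψ) (labelCluster δ A ∩ labelCluster δ B)
      ≤ ∑ e ∈ A, Measure.pi (fun _ => edgeMeasure unif01 ψ)
          (labelStar δ A e ∩ {ω | ∀ d ∈ B \ A, (ω c, ω d) ∈ labelWindow δ δ}) :=
        (measure_mono (labelCluster_inter_subset δ hcA hcB)).trans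
          (measure_biUnion_finset_le A _)
    _ ≤ ∑ _e ∈ A, (ψ {k | 0 < k} * ENNReal.ofReal (2 * δ)) ^ (B \ A).card
          * (ψ {k | 0 < k} ^ A.card
            * ENNReal.ofReal ((1 - δ) * δ ^ (A.card - 1) + δ ^ A.card / A.card)) :=
        Finset.sum_le_sum fun e he => by
          rw [← measure_labelStar ψ hδ.le hδ1 he]
          exact measure_labelStar_inter_le ψ δ Finset.disjoint_sdiff hcA he
    _ = ENNReal.ofReal (A.card * ((lmdPos ψ * (2 * δ)) ^ (B \ A).card
          * (lmdPos ψ ^ A.card * ((1 - δ) * δ ^ (A.card - 1) + δ ^ A.card / A.card)))) := by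
        rw [Finset.sum_const, nsmul_eq_mul, hq, ← ENNReal.ofReal_mul hq0,
          ← ENNReal.ofReal_pow (by positivity), ← ENNReal.ofReal_pow hq0,
          ← ENNReal.ofReal_mul (by positivity), ← ENNReal.ofReal_mul (by positivity),
          ← ENNReal.ofReal_natCast, ← ENNReal.ofReal_mul (by positivity)]
    _ = _ := by
        congr 1
        rw [hp, Nat.add_sub_cancel]
        push_cast
        field_simp
        ring

end LabelClusters

section VertexOverlap

variable {α β : Type*} [Fintype α] [DecidableEq β]

/-- The points that `φ'` maps into the range of `φ`; for injective maps their number is the number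
of vertices shared by the two images. -/
def overlap (φ φ' : α → β) : Finset α :=
  {x | φ' x ∈ Finset.univ.image φ}

variable [Fintype β] [DecidableEq α]

lemma card_filter_le_card_preimage (S : Finset β) (v : ℕ) :
    Finset.card {f : α → β | v ≤ Finset.card {x | f x ∈ S}}
      ≤ 2 ^ Fintype.card α * (S.card ^ v * Fintype.card β ^ (Fintype.card α - v)) := by
  let Q (T : Finset α) : Finset (α → β) :=
    Fintype.piFinset fun x => if x ∈ T then S else Finset.univ
  have hcover : ({f | v ≤ Finset.card {x | f x ∈ S}} : Finset (α → β))
      ⊆ (Finset.powersetCard v Finset.univ).biUnion Q := fun f hf => by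
    obtain ⟨T, hTS, hT⟩ := Finset.exists_subset_card_eq (Finset.mem_filter_univ f |>.1 hf)
    refine Finset.mem_biUnion.2 ⟨T, Finset.mem_powersetCard_univ.2 hT, Fintype.mem_piFinset.2
      fun x => ?_⟩
    split_ifs with hx
    · exact (Finset.mem_filter_univ x).1 (hTS hx)
    · exact Finset.mem_univ _
  have hcard (T : Finset α) (hT : T ∈ Finset.powersetCard v Finset.univ) :
      (Q T).card ≤ S.card ^ v * Fintype.card β ^ (Fintype.card α - v) := by
    rw [← Finset.mem_powersetCard_univ.1 hT, ← Finset.card_compl, Fintype.card_piFinset,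
      ← Finset.prod_mul_prod_compl T, ← Finset.prod_const, ← Finset.prod_const]
    exact (congrArg₂ (· * ·) (Finset.prod_congr rfl fun x hx => by rw [if_pos hx])
      (Finset.prod_congr rfl fun x hx => by
        rw [if_neg (Finset.mem_compl.1 hx), Finset.card_univ])).le
  calc _ ≤ (Finset.powersetCard v (Finset.univ : Finset α)).card
          * (S.card ^ v * Fintype.card β ^ (Fintype.card α - v)) :=
        (Finset.card_le_card hcover).trans (Finset.card_biUnion_le_card_mul _ _ _ hcard)
    _ ≤ _ := by
        rw [Finset.card_powersetCard]
        gcongr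
        exact Nat.choose_le_two_pow _ _

lemma sum_card_filter_le_card_overlap {v : ℕ} (hv : v ≤ Fintype.card α) :
    ∑ φ : α → β, Finset.card {φ' | v ≤ (overlap φ φ').card}
      ≤ (2 * Fintype.card α) ^ (2 * Fintype.card α)
        * Fintype.card β ^ (2 * Fintype.card α - v) := by
  set k := Fintype.card α with hk
  have hconst : 2 ^ k * k ^ v ≤ (2 * k) ^ (2 * k) := by
    rcases Nat.eq_zero_or_pos k with h0 | h0
    · simp [h0, Nat.le_zero.1 (h0 ▸ hv)]
    · calc 2 ^ k * k ^ v ≤ 2 ^ k * k ^ k := by gcongr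
        _ = (2 * k) ^ k := (mul_pow 2 k k).symm
        _ ≤ (2 * k) ^ (2 * k) := by gcongr <;> omega
  calc ∑ φ : α → β, Finset.card {φ' | v ≤ (overlap φ φ').card}
      ≤ ∑ _φ : α → β, 2 ^ k * (k ^ v * Fintype.card β ^ (k - v)) :=
        Finset.sum_le_sum fun φ _ => (card_filter_le_card_preimage _ v).trans <| by
          gcongr
          exact Finset.card_image_le
    _ = 2 ^ k * k ^ v * Fintype.card β ^ (2 * k - v) := by
        rw [Finset.sum_const, Finset.card_univ, Fintype.card_fun, ← hk, smul_eq_mul, two_mul,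
          Nat.add_sub_assoc hv, pow_add]
        ring
    _ ≤ (2 * k) ^ (2 * k) * Fintype.card β ^ (2 * k - v) := Nat.mul_le_mul_right _ hconst

end VertexOverlap

section GraphCopies

variable {V W : Type*} [Finite V] (H : SimpleGraph V)

/-- The edges of the copy of `H` under the vertex map `φ`. -/
def edgeImage (φ : V → W) : Finset (Sym2 W) :=
  (toFinite (Sym2.map φ '' H.edgeSet)).toFinset

@[simp]
lemma coe_edgeImage (φ : V → W) : (edgeImage H φ : Set (Sym2 W)) = Sym2.map φ '' H.edgeSet :=
  Finite.coe_toFinset _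

lemma mem_edgeImage {φ : V → W} {f : Sym2 W} :
    f ∈ edgeImage H φ ↔ ∃ e ∈ H.edgeSet, Sym2.map φ e = f :=
  Finite.mem_toFinset _

lemma card_edgeImage {φ : V → W} (hφ : φ.Injective) :
    (edgeImage H φ).card = H.edgeSet.ncard := by
  rw [← ncard_coe_finset, coe_edgeImage, ncard_image_of_injective _ (Sym2.map.injective hφ)]

/-- The subgraph of `H`, without isolated vertices, formed by the edges that `φ` maps into the copy
of `H` under `φ'`. -/
def copyOverlap (φ φ' : V → W) : H.Subgraph where
  verts := {v | ∃ w, H.Adj v w ∧ s(φ v, φ w) ∈ edgeImage H φ'}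
  Adj v w := H.Adj v w ∧ s(φ v, φ w) ∈ edgeImage H φ'
  adj_sub h := h.1
  edge_vert h := ⟨_, h⟩
  symm := ⟨fun _ _ h => ⟨h.1.symm, Sym2.eq_swap ▸ h.2⟩⟩

lemma mem_edgeSet_copyOverlap {φ φ' : V → W} {e : Sym2 V} :
    e ∈ (copyOverlap H φ φ').edgeSet ↔ e ∈ H.edgeSet ∧ Sym2.map φ e ∈ edgeImage H φ' := by
  induction e with
  | _ v w => rfl

lemma image_edgeSet_copyOverlap (φ φ' : V → W) :
    Sym2.map φ '' (copyOverlap H φ φ').edgeSet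
      = (edgeImage H φ : Set (Sym2 W)) ∩ edgeImage H φ' := by
  ext f
  constructor
  · rintro ⟨e, he, rfl⟩
    obtain ⟨heH, heφ'⟩ := (mem_edgeSet_copyOverlap H).1 he
    exact ⟨(mem_edgeImage H).2 ⟨e, heH, rfl⟩, heφ'⟩
  · rintro ⟨hf, hfφ'⟩
    obtain ⟨e, heH, rfl⟩ := (mem_edgeImage H).1 hf
    exact ⟨e, (mem_edgeSet_copyOverlap H).2 ⟨heH, hfφ'⟩, rfl⟩

variable [DecidableEq W]

lemma ncard_edgeSet_copyOverlap {φ : V → W} (hφ : φ.Injective) (φ' : V → W) :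
    (copyOverlap H φ φ').edgeSet.ncard = (edgeImage H φ ∩ edgeImage H φ').card := by
  rw [← ncard_coe_finset, Finset.coe_inter, ← image_edgeSet_copyOverlap,
    ncard_image_of_injective _ (Sym2.map.injective hφ)]

lemma ncard_verts_copyOverlap_le {V : Type*} [Fintype V] (H : SimpleGraph V) {φ : V → W}
    (hφ : φ.Injective) (φ' : V → W) :
    (copyOverlap H φ φ').verts.ncard ≤ (overlap φ φ').card := by
  have hsub : φ '' (copyOverlap H φ φ').verts ⊆ (overlap φ φ').image φ' := by
    rintro _ ⟨v, ⟨w, -, hvw⟩, rfl⟩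
    obtain ⟨e, -, he⟩ := (mem_edgeImage H).1 hvw
    obtain ⟨x, -, hx⟩ := Sym2.mem_map.1 (he ▸ Sym2.mem_mk_left (φ v) (φ w))
    exact Finset.mem_coe.2 (Finset.mem_image.2 ⟨x, by simp [overlap, hx], hx⟩)
  rw [← ncard_image_of_injective _ hφ]
  calc _ ≤ ((overlap φ φ').image φ').card := by
        rw [← ncard_coe_finset]
        exact ncard_le_ncard hsub (Finset.finite_toSet _)
    _ ≤ _ := Finset.card_image_le

end GraphCopies

lemma ncard_verts_eq_of_iso {V : Type*} {G : SimpleGraph V} {I J : G.Subgraph}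
    (f : I.coe ≃g J.coe) : I.verts.ncard = J.verts.ncard :=
  ncard_congr' f.toEquiv

lemma ncard_edgeSet_eq_of_iso {V : Type*} {G : SimpleGraph V} {I J : G.Subgraph}
    (f : I.coe ≃g J.coe) : I.edgeSet.ncard = J.edgeSet.ncard := by
  have hcoe (K : G.Subgraph) : K.edgeSet.ncard = K.coe.edgeSet.ncard := by
    rw [← K.image_coe_edgeSet_coe,
      ncard_image_of_injective _ (Sym2.map.injective Subtype.val_injective)]
  rw [hcoe, hcoe]
  exact ncard_congr' f.mapEdgeSet

section Occurrences

variable {V : Type*} (H : SimpleGraph V) (P : Sym2 V → Sym2 V → Prop) (δ : ℝ) {n : ℕ}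

lemma measurableSet_mem_bernOcc [Finite V] (φ : V → Fin n) :
    MeasurableSet {ω | φ ∈ bernOcc H P δ ω} := by
  have hlab (f : Sym2 (Fin n)) : Measurable fun ω : Sym2 (Fin n) → LabelSpace => labVal ω f 0 :=
    measurable_firstLabel.comp (measurable_pi_apply f)
  refine measurableSet_setOfPred.2 (measurable_const.and ?_)
  refine Measurable.and ?_ (Measurable.and ?_ ?_)
  · exact .forall fun e => .forall fun _ => measurableSet_setOfPred.1
      (measurableSet_labelled.preimage (measurable_pi_apply (Sym2.map φ e)))
  · exact .forall fun e => .forall fun _ => .forall fun f => .forall fun _ =>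
      measurableSet_setOfPred.1 (measurableSet_le ((hlab _).sub (hlab _)) measurable_const)
  · exact .forall fun e => .forall fun f => .forall fun _ =>
      measurableSet_setOfPred.1 (measurableSet_lt (hlab _) (hlab _))

variable {H P}

lemma dependsOn_mem_bernOcc (hP : ∀ e f, P e f → e ∈ H.edgeSet ∧ f ∈ H.edgeSet) (φ : V → Fin n) :
    DependsOn (· ∈ {ω | φ ∈ bernOcc H P δ ω}) (Sym2.map φ '' H.edgeSet) := by
  intro ω ω' h
  have hω (e : Sym2 V) (he : e ∈ H.edgeSet) : ω (Sym2.map φ e) = ω' (Sym2.map φ e) :=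
    h _ (mem_image_of_mem _ he)
  have hlab (e : Sym2 V) (he : e ∈ H.edgeSet) :
      labVal ω (Sym2.map φ e) 0 = labVal ω' (Sym2.map φ e) 0 := congrArg firstLabel (hω e he)
  refine propext (and_congr_right fun _ => and_congr ?_ (and_congr ?_ ?_))
  · exact forall₂_congr fun e he => by rw [hω e he]
  · exact forall₂_congr fun e he => forall₂_congr fun f hf => by rw [hlab e he, hlab f hf]
  · exact forall₂_congr fun e f => forall_congr' fun hef => by
      rw [hlab e (hP e f hef).1, hlab f (hP e f hef).2]

lemma setOf_mem_bernOcc_subset_labelCluster [Finite V] (φ : V → Fin n) :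
    {ω | φ ∈ bernOcc H P δ ω} ⊆ labelCluster δ (edgeImage H φ) := by
  rintro ω ⟨-, hlabelled, hδ, -⟩
  simp only [labelCluster, mem_edgeImage, forall_exists_index, and_imp, forall_apply_eq_imp_iff₂]
  exact ⟨hlabelled, hδ⟩

lemma setOf_mem_bernOcc_eq_empty {φ : V → Fin n} (hφ : ¬ φ.Injective) :
    {ω | φ ∈ bernOcc H P δ ω} = ∅ :=
  eq_empty_of_forall_notMem fun _ hω => hφ hω.1

variable (ψ : Measure ℕ) [IsProbabilityMeasure ψ]

instance : IsProbabilityMeasure (contModel (Fin n) ψ) :=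
  inferInstanceAs (IsProbabilityMeasure (Measure.pi fun _ => edgeMeasure unif01 ψ))

lemma measureReal_mem_bernOcc_inter_of_disjoint [Finite V]
    (hP : ∀ e f, P e f → e ∈ H.edgeSet ∧ f ∈ H.edgeSet) {φ φ' : V → Fin n}
    (hdisj : Disjoint (edgeImage H φ) (edgeImage H φ')) :
    (contModel (Fin n) ψ).real ({ω | φ ∈ bernOcc H P δ ω} ∩ {ω | φ' ∈ bernOcc H P δ ω})
      = (contModel (Fin n) ψ).real {ω | φ ∈ bernOcc H P δ ω}
        * (contModel (Fin n) ψ).real {ω | φ' ∈ bernOcc H P δ ω} := by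
  rw [measureReal_def, measureReal_def, measureReal_def, ← ENNReal.toReal_mul]
  refine congrArg ENNReal.toReal (measure_pi_inter_of_dependsOn (A := edgeImage H φ) _
    (measurableSet_mem_bernOcc H P δ φ) (measurableSet_mem_bernOcc H P δ φ') ?_ ?_)
  · exact coe_edgeImage H φ ▸ dependsOn_mem_bernOcc δ hP φ
  · refine (dependsOn_mem_bernOcc δ hP φ').mono ?_
    rw [← coe_edgeImage]
    exact (Finset.disjoint_coe.2 hdisj).subset_compl_left

variable {δ}

lemma measureReal_mem_bernOcc_inter_le [Finite V] (hδ : 0 < δ) (hδ1 : δ ≤ 1) {φ φ' : V → Fin n}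
    (hφ : φ.Injective) (hφ' : φ'.Injective) (hne : (copyOverlap H φ φ').edgeSet.Nonempty) :
    (contModel (Fin n) ψ).real ({ω | φ ∈ bernOcc H P δ ω} ∩ {ω | φ' ∈ bernOcc H P δ ω})
      ≤ (δ * lmdPos ψ) ^ H.edgeSet.ncard * (1 + H.edgeSet.ncard * (1 - δ) / δ)
        * (2 * δ * lmdPos ψ) ^ (H.edgeSet.ncard - (copyOverlap H φ φ').edgeSet.ncard) := by
  have hinter : (edgeImage H φ ∩ edgeImage H φ').Nonempty := by
    rw [← Finset.card_pos, ← ncard_edgeSet_copyOverlap H hφ]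
    exact (ncard_pos (toFinite _)).2 hne
  have hcard : (edgeImage H φ' \ edgeImage H φ).card
      = H.edgeSet.ncard - (copyOverlap H φ φ').edgeSet.ncard := by
    rw [Finset.card_sdiff, card_edgeImage H hφ', ncard_edgeSet_copyOverlap H hφ]
  rw [← hcard, ← card_edgeImage H hφ]
  exact (measureReal_mono (inter_subset_inter (setOf_mem_bernOcc_subset_labelCluster δ φ)
    (setOf_mem_bernOcc_subset_labelCluster δ φ'))).trans
    (measureReal_labelCluster_inter_le ψ hδ hδ1 hinter)

/-- A pair of copies of `H` contributes to the variance only if the copies share an edge, and then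
the shared edges form a graph isomorphic to one of the representatives in `R`. -/
lemma covariance_mem_bernOcc_le [Fintype V]
    (hP : ∀ e f, P e f → e ∈ H.edgeSet ∧ f ∈ H.edgeSet) (hδ : 0 < δ) (hδ1 : δ ≤ 1)
    {R : Finset H.Subgraph}
    (hR : ∀ I : H.Subgraph, I.edgeSet.Nonempty → ∃ J ∈ R, Nonempty (I.coe ≃g J.coe))
    (φ φ' : V → Fin n) :
    (contModel (Fin n) ψ).real ({ω | φ ∈ bernOcc H P δ ω} ∩ {ω | φ' ∈ bernOcc H P δ ω})
        - (contModel (Fin n) ψ).real {ω | φ ∈ bernOcc H P δ ω}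
          * (contModel (Fin n) ψ).real {ω | φ' ∈ bernOcc H P δ ω}
      ≤ ∑ J ∈ R, if J.verts.ncard ≤ (overlap φ φ').card then
          (δ * lmdPos ψ) ^ H.edgeSet.ncard * (1 + H.edgeSet.ncard * (1 - δ) / δ)
            * (2 * δ * lmdPos ψ) ^ (H.edgeSet.ncard - J.edgeSet.ncard) else 0 := by
  have hq : 0 ≤ lmdPos ψ := ENNReal.toReal_nonneg
  have : 0 ≤ 1 - δ := sub_nonneg.2 hδ1
  have hterm : ∀ J ∈ R, 0 ≤ if J.verts.ncard ≤ (overlap φ φ').card then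
      (δ * lmdPos ψ) ^ H.edgeSet.ncard * (1 + H.edgeSet.ncard * (1 - δ) / δ)
        * (2 * δ * lmdPos ψ) ^ (H.edgeSet.ncard - J.edgeSet.ncard) else 0 := fun J _ => by
    split_ifs <;> positivity
  by_cases hinj : φ.Injective ∧ φ'.Injective
  swap
  · refine le_trans (le_of_eq ?_) (Finset.sum_nonneg hterm)
    rcases not_and_or.1 hinj with h | h <;> simp [setOf_mem_bernOcc_eq_empty δ h]
  by_cases hdisj : Disjoint (edgeImage H φ) (edgeImage H φ')
  · exact (sub_eq_zero.2 (measureReal_mem_bernOcc_inter_of_disjoint δ ψ hP hdisj)).trans_le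
      (Finset.sum_nonneg hterm)
  have hne : (copyOverlap H φ φ').edgeSet.Nonempty := by
    rw [← ncard_pos (toFinite _), ncard_edgeSet_copyOverlap H hinj.1, Finset.card_pos]
    exact Finset.not_disjoint_iff_nonempty_inter.1 hdisj
  obtain ⟨J, hJR, ⟨iso⟩⟩ := hR _ hne
  refine (sub_le_self _ (by positivity)).trans
    ((measureReal_mem_bernOcc_inter_le ψ hδ hδ1 hinj.1 hinj.2 hne).trans ?_)
  refine le_trans (le_of_eq ?_) (Finset.single_le_sum hterm hJR)
  rw [if_pos (ncard_verts_eq_of_iso iso ▸ ncard_verts_copyOverlap_le H hinj.1 φ'),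
    ncard_edgeSet_eq_of_iso iso]

end Occurrences

section VarianceBound

/-- For `x = 0` this relies on `0⁻¹ = 0`. -/
lemma pow_two_mul_sub {K : Type*} [GroupWithZero K] (x : K) {v k : ℕ} (hv : v ≤ k) :
    x ^ (2 * k - v) = x ^ (2 * k) * x ^ (-(v : ℤ)) := by
  rcases eq_or_ne x 0 with rfl | hx
  · rcases Nat.eq_zero_or_pos v with rfl | hv0
    · simp
    · rw [zero_pow (by omega), zero_pow (by omega), zero_mul]
  · rw [pow_sub₀ x hx (by omega), zpow_neg, zpow_natCast]

lemma sqrt_two_mul_pow_two_mul (x : ℝ) (m : ℕ) :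
    (√2 * x) ^ (2 * m) = x ^ m * (2 * x) ^ m := by
  rw [pow_mul, mul_pow, Real.sq_sqrt zero_le_two, ← mul_pow]
  ring

lemma sum_card_filter_overlap_mul_le {V : Type*} [Fintype V] [DecidableEq V] {H : SimpleGraph V}
    {n : ℕ} (J : H.Subgraph) {x c : ℝ} (hx : 0 < x) (hc : 0 ≤ c) :
    ((∑ φ : V → Fin n, Finset.card {φ' | J.verts.ncard ≤ (overlap φ φ').card} : ℕ) : ℝ)
        * (x ^ H.edgeSet.ncard * c * (2 * x) ^ (H.edgeSet.ncard - J.edgeSet.ncard))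
      ≤ (√2 * x) ^ (2 * H.edgeSet.ncard) * c * (n : ℝ) ^ (2 * Fintype.card V)
        * ((2 * Fintype.card V : ℕ) : ℝ) ^ (2 * Fintype.card V)
        * ((2 * x) ^ (-(J.edgeSet.ncard : ℤ)) * (n : ℝ) ^ (-(J.verts.ncard : ℤ))) := by
  have hverts : J.verts.ncard ≤ Fintype.card V :=
    (ncard_le_card _).trans_eq Nat.card_eq_fintype_card
  have hedges : J.edgeSet.ncard ≤ H.edgeSet.ncard :=
    ncard_le_ncard J.edgeSet_subset (toFinite _)
  have hpow : (2 * x) ^ (H.edgeSet.ncard - J.edgeSet.ncard)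
      = (2 * x) ^ H.edgeSet.ncard * (2 * x) ^ (-(J.edgeSet.ncard : ℤ)) := by
    rw [pow_sub₀ _ (by positivity) hedges, zpow_neg, zpow_natCast]
  have hcount := sum_card_filter_le_card_overlap (β := Fin n) hverts
  rw [Fintype.card_fin] at hcount
  calc _ ≤ (((2 * Fintype.card V) ^ (2 * Fintype.card V)
            * n ^ (2 * Fintype.card V - J.verts.ncard) : ℕ) : ℝ)
          * (x ^ H.edgeSet.ncard * c * (2 * x) ^ (H.edgeSet.ncard - J.edgeSet.ncard)) := by
        gcongr
    _ = _ := by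
        rw [sqrt_two_mul_pow_two_mul, hpow, Nat.cast_mul, Nat.cast_pow, Nat.cast_pow,
          pow_two_mul_sub _ hverts]
        ring

lemma lmdPos_eq_one_sub (ψ : Measure ℕ) [IsProbabilityMeasure ψ] : lmdPos ψ = 1 - ψ.real {0} := by
  rw [← probReal_compl_eq_one_sub (measurableSet_singleton 0)]
  exact congrArg ψ.real (Set.ext fun k => Nat.pos_iff_ne_zero)

end VarianceBound

/-- For a general label multiplicity distribution, `bernOcc` looks only at the first sampled label
of each edge. -/
theorem statement14_general {VH : Type*} [Fintype VH] (H : SimpleGraph VH)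
    (P : Sym2 VH → Sym2 VH → Prop) (hP : ∀ e f, P e f → e ∈ H.edgeSet ∧ f ∈ H.edgeSet)
    (ψ : Measure ℕ) [IsProbabilityMeasure ψ] (hψ : 0 < lmdPos ψ)
    (δ : ℝ) (hδ : 0 < δ) (hδ1 : δ ≤ 1) (n : ℕ) (R : Set H.Subgraph)
    (hR : ∀ I : H.Subgraph, I.edgeSet.Nonempty → ∃ J ∈ R, Nonempty (I.coe ≃g J.coe)) :
    variance (fun ω => ((bernOcc H P δ ω).ncard : ℝ)) (contModel (Fin n) ψ)
      ≤ (√2 * δ * lmdPos ψ) ^ (2 * H.edgeSet.ncard)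
        * (1 + H.edgeSet.ncard * (1 - δ) / δ)
        * (n : ℝ) ^ (2 * Fintype.card VH)
        * ((2 * Fintype.card VH : ℕ) : ℝ) ^ (2 * Fintype.card VH)
        * ∑ᶠ I ∈ R,
            (2 * δ * lmdPos ψ) ^ (-(I.edgeSet.ncard : ℤ))
              * (n : ℝ) ^ (-(I.verts.ncard : ℤ)) := by
  classical
  obtain ⟨R, rfl⟩ := R.toFinite.exists_finset_coe
  have hfactor : 0 ≤ 1 + H.edgeSet.ncard * (1 - δ) / δ := by
    have := sub_nonneg.2 hδ1
    positivity
  rw [variance_ncard (measurableSet_mem_bernOcc H P δ), finsum_mem_coe_finset, Finset.mul_sum]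
  calc _ ≤ ∑ φ : VH → Fin n, ∑ φ' : VH → Fin n, ∑ J ∈ R,
          if J.verts.ncard ≤ (overlap φ φ').card then
            (δ * lmdPos ψ) ^ H.edgeSet.ncard * (1 + H.edgeSet.ncard * (1 - δ) / δ)
              * (2 * δ * lmdPos ψ) ^ (H.edgeSet.ncard - J.edgeSet.ncard) else 0 := by
        gcongr with φ _ φ' _
        exact covariance_mem_bernOcc_le ψ hP hδ hδ1 hR φ φ'
    _ = ∑ J ∈ R, ((∑ φ : VH → Fin n,
          Finset.card {φ' | J.verts.ncard ≤ (overlap φ φ').card} : ℕ) : ℝ)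
          * ((δ * lmdPos ψ) ^ H.edgeSet.ncard * (1 + H.edgeSet.ncard * (1 - δ) / δ)
            * (2 * δ * lmdPos ψ) ^ (H.edgeSet.ncard - J.edgeSet.ncard)) := by
        rw [Finset.sum_congr rfl fun φ _ => Finset.sum_comm, Finset.sum_comm]
        simp only [← Finset.sum_filter, Finset.sum_const, nsmul_eq_mul, Nat.cast_sum,
          Finset.sum_mul]
    _ ≤ _ := by
        simp only [mul_assoc 2 δ, mul_assoc √2 δ]
        exact Finset.sum_le_sum fun J _ =>
          sum_card_filter_overlap_mul_le J (mul_pos hδ hψ) hfactor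

/-- Second-moment upper bound for Bernoulli label multiplicity
distributions: the variance of the number of `δ`-temporal occurrences of `(H, P)` in
`Γ_{[n]}(ψ)`, where the sum ranges over a set `R` of representatives of the isomorphism
classes of subgraphs of `H` with at least one edge. -/
theorem statement14 {VH : Type} [Fintype VH] [DecidableEq VH] (H : SimpleGraph VH)
    (hH : 1 ≤ H.edgeSet.ncard)
    (P : Sym2 VH → Sym2 VH → Prop) (hP : StrictPartialOrderOn H.edgeSet P)
    (r : ℝ) (hr : 0 < r) (hr1 : r ≤ 1)
    (ψ : Measure ℕ) (hprob : IsProbabilityMeasure ψ)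
    (hone : ψ {1} = ENNReal.ofReal r) (hzero : ψ {0} = ENNReal.ofReal (1 - r))
    (δ : ℝ) (hδ : 0 < δ) (hδ1 : δ < 1) (n : ℕ)
    (R : Set H.Subgraph) (hRfin : R.Finite)
    (hRedge : ∀ J ∈ R, J.edgeSet.Nonempty)
    (hRrep : ∀ I : H.Subgraph, I.edgeSet.Nonempty →
      ∃ J ∈ R, Nonempty (I.coe ≃g J.coe))
    (hRuniq : ∀ J₁ ∈ R, ∀ J₂ ∈ R, Nonempty (J₁.coe ≃g J₂.coe) → J₁ = J₂) :
    variance (fun ω => ((bernOcc H P δ ω).ncard : ℝ)) (contModel (Fin n) ψ)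
      ≤ (Real.sqrt 2 * δ * r) ^ (2 * H.edgeSet.ncard)
        * (1 + H.edgeSet.ncard * (1 - δ) / δ)
        * (n : ℝ) ^ (2 * Fintype.card VH)
        * ((2 * Fintype.card VH : ℕ) : ℝ) ^ (2 * Fintype.card VH)
        * ∑ᶠ I ∈ R,
            (2 * δ * r) ^ (-(I.edgeSet.ncard : ℤ)) * (n : ℝ) ^ (-(I.verts.ncard : ℤ)) := by
  have hq : lmdPos ψ = r := by
    rw [lmdPos_eq_one_sub, measureReal_def, hzero, ENNReal.toReal_ofReal (sub_nonneg.2 hr1),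
      sub_sub_cancel]
  subst hq
  exact statement14_general H P hP.2.2 ψ hr δ hδ hδ1.le n R hRrep

end RTG
end
end

section
/- Let H=(V_H,E_H) be a fixed graph with at least one edge, P a strict partial order on E_H, let ψ be a label multiplicity distribution with mean r and second moment r₂ that is almost surely bounded (there exists C with P[Q≤C]=1), 0<δ<1, and 𝒢 a sample from Γ_{[n]}(ψ). Let N_δ be the number of pairs (φ,τ) where φ:V_H→[n] is injective and τ assigns to each edge e∈E_H an index τ(e)∈{1,…,l_{φ(e)}} of one of the labels of edge φ(e), such that the selected labels all lie within an interval of length δ and satisfy the order P under φ. Then Var[N_δ] ≤ δ^{2|E_H|}·r^{2|E_H|}·(1 + |E_H|(1−δ)/δ)²·Σ ((δr₂+r−δr)/(δr²))^{k(φ₁,φ₂)}, where the sum ranges over ordered pairs of injective maps φ₁,φ₂:V_H→[n] whose edge images share at least one edge, and k(φ₁,φ₂) is the number of edges of K_n shared by the two images. -/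
open MeasureTheory ProbabilityTheory Filter Set
open scoped ENNReal NNReal Topology

noncomputable section

namespace RTG

/-- The set of occurrences of `(H, P)` as a `δ`-temporal motif in the sample `ω`:
pairs of an injective vertex map `φ` and a choice `τ` of a label index for each edge,
such that the selected labels lie within an interval of length `δ` and realize `P`. -/
def motifOcc {VH : Type*} {n : ℕ} (H : SimpleGraph VH) (P : Sym2 VH → Sym2 VH → Prop)
    (δ : ℝ) (ω : Sym2 (Fin n) → LabelSpace) : Set ((VH → Fin n) × (Sym2 VH → ℕ)) :=
  {p | Function.Injective p.1 ∧ (∀ e, e ∉ H.edgeSet → p.2 e = 0) ∧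
    (∀ e ∈ H.edgeSet, p.2 e < (ω (Sym2.map p.1 e)).1) ∧
    (∀ e ∈ H.edgeSet, ∀ f ∈ H.edgeSet,
      labVal ω (Sym2.map p.1 e) (p.2 e) - labVal ω (Sym2.map p.1 f) (p.2 f) ≤ δ) ∧
    (∀ e f, P e f →
      labVal ω (Sym2.map p.1 e) (p.2 e) < labVal ω (Sym2.map p.1 f) (p.2 f))}

/-- The number of edges of `K_n` shared by the images of `H` under the two maps. -/
def sharedEdges {VH : Type*} {n : ℕ} (H : SimpleGraph VH)
    (φ₁ φ₂ : VH → Fin n) : Set (Sym2 (Fin n)) :=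
  (Sym2.map φ₁ '' H.edgeSet) ∩ (Sym2.map φ₂ '' H.edgeSet)

/-!
The variance of the motif count is the sum, over pairs of copies of `H`, of the covariances of the
numbers of occurrences on the two copies. Copies without a common edge have independent counts, so
only overlapping pairs contribute, and there the covariance is at most the joint second moment.

Given the multiplicities, this moment is a finite sum over pairs of selections of labels. The labels
of the second selection which do not belong to the first one are independent of the first selection,
hence a pair selecting `d` distinct labels contributes at most a constant times `δ ^ d`. An edge
with `k` labels on which both selections live contributes `k` pairs with one and `k * (k - 1)` pairs
with two distinct labels, and `𝔼[δ * k + δ ^ 2 * k * (k - 1)] = (δ * r) ^ 2 * ρ`, where `ρ` is the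
ratio raised to the number of shared edges in the statement.
-/

lemma comp_updateFinset_restrict_of_dependsOn {ι β : Type*} {X : ι → Type*} [DecidableEq ι]
    {f : (∀ i, X i) → β} {s : Finset ι} (hf : DependsOn f s) (x₀ : ∀ i, X i) :
    (f ∘ Function.updateFinset x₀ s) ∘ s.restrict = f :=
  funext fun x => hf fun i hi => by simp [Function.updateFinset, Finset.mem_coe.1 hi]

lemma indepFun_infinitePi_of_dependsOn {ι β γ : Type*} {X : ι → Type*}
    [∀ i, MeasurableSpace (X i)] [MeasurableSpace β] [MeasurableSpace γ]
    {μ : ∀ i, Measure (X i)} [∀ i, IsProbabilityMeasure (μ i)] {f : (∀ i, X i) → β}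
    {g : (∀ i, X i) → γ} (hf : Measurable f) (hg : Measurable g) {s t : Finset ι}
    (hfs : DependsOn f s) (hgt : DependsOn g t) (hst : Disjoint s t) :
    IndepFun f g (Measure.infinitePi μ) := by
  classical
  obtain ⟨x₀⟩ : Nonempty (∀ i, X i) := ⟨fun i => (nonempty_of_isProbabilityMeasure (μ i)).some⟩
  have restrict_indep := (iIndepFun_infinitePi (P := μ) (X := fun _ => id)
    fun _ => measurable_id).indepFun_finset s t hst fun i => measurable_pi_apply i
  rw [← comp_updateFinset_restrict_of_dependsOn hfs x₀,
    ← comp_updateFinset_restrict_of_dependsOn hgt x₀]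
  exact restrict_indep.comp (hf.comp measurable_updateFinset) (hg.comp measurable_updateFinset)

lemma unif01_apply_le (s : Set ℝ) : unif01 s ≤ volume s :=
  Measure.restrict_apply_le _ _

lemma unif01_Ioi_one_sub_le (δ : ℝ) : unif01 (Ioi (1 - δ)) ≤ ENNReal.ofReal δ := by
  rw [unif01, Measure.restrict_apply measurableSet_Ioi, inter_comm, Ioc_inter_Ioi, Real.volume_Ioc]
  exact ENNReal.ofReal_le_ofReal (by linarith [le_max_right 0 (1 - δ)])

lemma unif01_Iic_le (a : ℝ) : unif01 (Iic a) ≤ ENNReal.ofReal a := by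
  rw [unif01, Measure.restrict_apply measurableSet_Iic, inter_comm, Ioc_inter_Iic, Real.volume_Ioc]
  exact ENNReal.ofReal_le_ofReal (by linarith [min_le_right 1 a])

/-- The values of `x` at the indices in `s` fit into an interval of length `δ`. -/
def WithinWindow {ι : Type*} (δ : ℝ) (s : Finset ι) (x : ι → ℝ) : Prop :=
  ∀ i ∈ s, ∀ j ∈ s, x i - x j ≤ δ

/-- The probability that `m` independent uniform labels fit into an interval of length `δ`, divided
by the probability `δ ^ m` that they all lie in one given interval of that length. -/
def windowFactor (δ : ℝ) (m : ℕ) : ℝ := 1 + m * (1 - δ) / δ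

section Window

variable {ι : Type*} {δ : ℝ}

lemma WithinWindow.mono {s t : Finset ι} {x : ι → ℝ} (hst : s ⊆ t) (h : WithinWindow δ t x) :
    WithinWindow δ s x :=
  fun i hi j hj => h i (hst hi) j (hst hj)

lemma measurableSet_withinWindow {Ω : Type*} [MeasurableSpace Ω] (s : Finset ι)
    {X : ι → Ω → ℝ} (hX : ∀ i, Measurable (X i)) :
    MeasurableSet {ω | WithinWindow δ s fun i => X i ω} := by
  simp only [WithinWindow, Set.ofPred_forall]
  exact s.measurableSet_biInter fun i _ => s.measurableSet_biInter fun j _ =>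
    measurableSet_le ((hX i).sub (hX j)) measurable_const

lemma windowFactor_mono (hδ : 0 < δ) (hδ1 : δ ≤ 1) : Monotone (windowFactor δ) := by
  intro m k hmk
  have : 0 ≤ 1 - δ := sub_nonneg.2 hδ1
  unfold windowFactor
  gcongr

lemma windowFactor_nonneg (hδ : 0 < δ) (hδ1 : δ ≤ 1) (m : ℕ) : 0 ≤ windowFactor δ m := by
  have : 0 ≤ 1 - δ := sub_nonneg.2 hδ1
  unfold windowFactor
  positivity

lemma infinitePi_unif01_forall_mem_Icc_le (s : Finset ι) {i : ι} (hi : i ∉ s) :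
    Measure.infinitePi (fun _ : ι => unif01)
        {x | x i ≤ 1 - δ ∧ ∀ j ∈ s, x j ∈ Icc (x i) (x i + δ)}
      ≤ ENNReal.ofReal (1 - δ) * ENNReal.ofReal δ ^ s.card := by
  set B : Set (ℝ × (s → ℝ)) := {p | p.1 ≤ 1 - δ ∧ ∀ j, p.2 j ∈ Icc p.1 (p.1 + δ)} with hB
  have measurableSet_B : MeasurableSet B := by
    simp only [hB, mem_Icc, measurableSet_setOfPred]
    fun_prop
  have indep : IndepFun (fun x : ι → ℝ => x i) s.restrict
      (Measure.infinitePi fun _ : ι => unif01) :=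
    indepFun_infinitePi_of_dependsOn (measurable_pi_apply i) (Finset.measurable_restrict s)
      (s := {i}) (t := s) (fun x y h => h i (by simp)) (fun x y h => funext fun j => h j j.2)
      (Finset.disjoint_singleton_left.2 hi)
  have joint_law := (indepFun_iff_map_prod_eq_prod_map_map (measurable_pi_apply i).aemeasurable
    (Finset.measurable_restrict s).aemeasurable).1 indep
  rw [Measure.infinitePi_map_eval, Measure.infinitePi_map_restrict] at joint_law
  have slice_le (a : ℝ) : Measure.pi (fun _ : s => unif01) (Prod.mk a ⁻¹' B) ≤
      (Iic (1 - δ)).indicator (fun _ => ENNReal.ofReal δ ^ s.card) a := by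
    by_cases ha : a ≤ 1 - δ
    · have : Prod.mk a ⁻¹' B = univ.pi fun _ => Icc a (a + δ) := by
        ext; simp only [hB, ha, mem_preimage, mem_ofPred_eq, true_and, mem_univ_pi]
      rw [this, Measure.pi_pi, indicator_of_mem (mem_Iic.2 ha)]
      refine (Finset.prod_le_prod' fun _ _ => unif01_apply_le _).trans (by simp)
    · simp [hB, ha]
  calc Measure.infinitePi (fun _ : ι => unif01)
        {x | x i ≤ 1 - δ ∧ ∀ j ∈ s, x j ∈ Icc (x i) (x i + δ)}
      = Measure.infinitePi (fun _ : ι => unif01) ((fun x => (x i, s.restrict x)) ⁻¹' B) := by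
        congr 1; ext x; simp [hB]
    _ = ∫⁻ a, Measure.pi (fun _ : s => unif01) (Prod.mk a ⁻¹' B) ∂unif01 := by
        rw [← Measure.map_apply (by fun_prop) measurableSet_B, joint_law,
          Measure.prod_apply measurableSet_B]
    _ ≤ ENNReal.ofReal δ ^ s.card * unif01 (Iic (1 - δ)) := by
        rw [← lintegral_indicator_const measurableSet_Iic]
        exact lintegral_mono slice_le
    _ ≤ ENNReal.ofReal (1 - δ) * ENNReal.ofReal δ ^ s.card := by
        rw [mul_comm]
        gcongr
        exact unif01_Iic_le _

/-- Unless all values exceed `1 - δ`, the smallest one is at most `1 - δ` and the others lie within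
distance `δ` above it. -/
lemma infinitePi_unif01_withinWindow_le (hδ : 0 < δ) (hδ1 : δ ≤ 1) (s : Finset ι) :
    Measure.infinitePi (fun _ : ι => unif01) {x | WithinWindow δ s x}
      ≤ ENNReal.ofReal (δ ^ s.card * windowFactor δ s.card) := by
  classical
  set ν := Measure.infinitePi fun _ : ι => unif01
  rcases s.eq_empty_or_nonempty with rfl | hs
  · simpa [windowFactor] using prob_le_one
  have cover : {x | WithinWindow δ s x} ⊆ Set.pi s (fun _ => Ioi (1 - δ)) ∪
      ⋃ i ∈ s, {x | x i ≤ 1 - δ ∧ ∀ j ∈ s.erase i, x j ∈ Icc (x i) (x i + δ)} := by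
    intro x hx
    obtain ⟨i, hi, hmin⟩ := s.exists_min_image x hs
    by_cases h : x i ≤ 1 - δ
    · refine Or.inr (mem_biUnion hi ⟨h, fun j hj => ?_⟩)
      have hj := Finset.mem_of_mem_erase hj
      exact ⟨hmin j hj, by linarith [hx j hj i hi]⟩
    · exact Or.inl fun j hj => (not_le.1 h).trans_le (hmin j hj)
  have all_large : ν (Set.pi s fun _ => Ioi (1 - δ)) ≤ ENNReal.ofReal δ ^ s.card := by
    rw [Measure.infinitePi_pi _ fun _ _ => measurableSet_Ioi]
    exact Finset.prod_le_pow_card _ _ _ fun _ _ => unif01_Ioi_one_sub_le δ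
  have some_small : ν (⋃ i ∈ s, {x | x i ≤ 1 - δ ∧ ∀ j ∈ s.erase i, x j ∈ Icc (x i) (x i + δ)}) ≤
      s.card • (ENNReal.ofReal (1 - δ) * ENNReal.ofReal δ ^ (s.card - 1)) := by
    refine (measure_biUnion_finset_le s _).trans (Finset.sum_le_card_nsmul _ _ _ fun i hi => ?_)
    rw [← Finset.card_erase_of_mem hi]
    exact infinitePi_unif01_forall_mem_Icc_le _ (s.notMem_erase i)
  calc ν {x | WithinWindow δ s x}
      ≤ ENNReal.ofReal δ ^ s.card +
          s.card • (ENNReal.ofReal (1 - δ) * ENNReal.ofReal δ ^ (s.card - 1)) :=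
        (measure_mono cover).trans ((measure_union_le _ _).trans (add_le_add all_large some_small))
    _ = ENNReal.ofReal (δ ^ s.card + s.card * ((1 - δ) * δ ^ (s.card - 1))) := by
        have : 0 ≤ 1 - δ := sub_nonneg.2 hδ1
        rw [ENNReal.ofReal_add (by positivity) (by positivity), ENNReal.ofReal_mul (by positivity),
          ENNReal.ofReal_mul this, ENNReal.ofReal_pow hδ.le, ENNReal.ofReal_pow hδ.le,
          ENNReal.ofReal_natCast, nsmul_eq_mul]
    _ = ENNReal.ofReal (δ ^ s.card * windowFactor δ s.card) := by
        obtain ⟨m, hm⟩ := Nat.exists_eq_succ_of_ne_zero hs.card_pos.ne'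
        rw [hm, windowFactor]
        congr 1
        simp only [Nat.succ_eq_add_one, Nat.add_sub_cancel]
        field_simp
        ring

lemma infinitePi_unif01_withinWindow_inter_le (hδ : 0 < δ) (hδ1 : δ ≤ 1) {s t : Finset ι}
    (hst : Disjoint s t) :
    Measure.infinitePi (fun _ : ι => unif01) ({x | WithinWindow δ s x} ∩ {x | WithinWindow δ t x})
      ≤ ENNReal.ofReal
          (windowFactor δ s.card * windowFactor δ t.card * (δ ^ s.card * δ ^ t.card)) := by
  have measurable (s : Finset ι) : Measurable fun x : ι → ℝ => WithinWindow δ s x :=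
    measurableSet_setOfPred.1 (measurableSet_withinWindow s measurable_pi_apply)
  have dependsOn (s : Finset ι) : DependsOn (fun x : ι → ℝ => WithinWindow δ s x) s :=
    fun x y h => propext <| forall₄_congr fun i hi j hj => by rw [h i hi, h j hj]
  have indep : IndepFun (WithinWindow δ s) (WithinWindow δ t)
      (Measure.infinitePi fun _ : ι => unif01) :=
    indepFun_infinitePi_of_dependsOn (measurable s) (measurable t) (dependsOn s) (dependsOn t) hst
  calc Measure.infinitePi (fun _ : ι => unif01)
        ({x | WithinWindow δ s x} ∩ {x | WithinWindow δ t x})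
      = Measure.infinitePi (fun _ : ι => unif01) {x | WithinWindow δ s x} *
          Measure.infinitePi (fun _ : ι => unif01) {x | WithinWindow δ t x} :=
        indep.measure_inter_preimage_eq_mul {p | p} {p | p} (.of_discrete) (.of_discrete)
    _ ≤ ENNReal.ofReal (δ ^ s.card * windowFactor δ s.card) *
          ENNReal.ofReal (δ ^ t.card * windowFactor δ t.card) := by
        gcongr <;> exact infinitePi_unif01_withinWindow_le hδ hδ1 _
    _ = _ := by
        have := windowFactor_nonneg hδ hδ1 s.card
        rw [← ENNReal.ofReal_mul (by positivity)]
        congr 1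
        ring

end Window

lemma lintegral_card_filter_mul_card_filter {Ω α β : Type*} [MeasurableSpace Ω] (μ : Measure Ω)
    (S : Finset α) (T : Finset β) {p : α → Ω → Prop} {q : β → Ω → Prop}
    [∀ a ω, Decidable (p a ω)] [∀ b ω, Decidable (q b ω)]
    (hp : ∀ a, MeasurableSet {ω | p a ω}) (hq : ∀ b, MeasurableSet {ω | q b ω}) :
    ∫⁻ ω, ((S.filter (p · ω)).card : ℝ≥0∞) * (T.filter (q · ω)).card ∂μ
      = ∑ a ∈ S, ∑ b ∈ T, μ ({ω | p a ω} ∩ {ω | q b ω}) := by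
  have pointwise (ω : Ω) : ((S.filter (p · ω)).card : ℝ≥0∞) * (T.filter (q · ω)).card
      = ∑ a ∈ S, ∑ b ∈ T, ({ω | p a ω} ∩ {ω | q b ω}).indicator (1 : Ω → ℝ≥0∞) ω := by
    simp only [Finset.card_filter, Nat.cast_sum, Finset.sum_mul_sum, indicator_apply, mem_inter_iff,
      mem_ofPred_eq, Pi.one_apply, Nat.cast_ite, Nat.cast_one, Nat.cast_zero,
      ite_zero_mul_ite_zero, mul_one]
  have measurable (a : α) (b : β) :
      Measurable (({ω | p a ω} ∩ {ω | q b ω}).indicator (1 : Ω → ℝ≥0∞)) :=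
    measurable_one.indicator ((hp a).inter (hq b))
  simp_rw [pointwise]
  rw [lintegral_finsetSum _ fun a _ => Finset.measurable_sum _ fun b _ => measurable a b]
  refine Finset.sum_congr rfl fun a _ => ?_
  rw [lintegral_finsetSum _ fun b _ => measurable a b]
  exact Finset.sum_congr rfl fun b _ => lintegral_indicator_one ((hp a).inter (hq b))

section Selections

variable {E : Type*} [DecidableEq E] {δ : ℝ}

/-- The labels selected by `σ` on the edges in `F`, where `(f, i)` stands for the `i`-th label of
the edge `f`. -/
def selectedLabels (F : Finset E) (σ : E → ℕ) : Finset (E × ℕ) :=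
  F.image fun f => (f, σ f)

/-- The selections of one label index for each edge in `F`, when the edge `f` carries `l f` labels.
Off `F` the index is fixed to be `0`, so that each selection is counted once. -/
def labelChoices [Fintype E] (F : Finset E) (l : E → ℕ) : Finset (E → ℕ) :=
  Fintype.piFinset fun f => if f ∈ F then Finset.range (l f) else {0}

/-- The contribution of an edge with `k` labels to the expected number of pairs of selections. Here
`p` and `q` say whether the first and the second selection use that edge; each distinct label that
is selected costs a factor `δ`. -/
def overlapWeight (δ : ℝ) (p q : Prop) [Decidable p] [Decidable q] (k : ℕ) : ℝ :=
  if p ∧ q then δ * (δ * (k : ℝ) ^ 2 + (1 - δ) * k) else if p ∨ q then δ * k else 1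

lemma withinWindow_selectedLabels {F : Finset E} {σ : E → ℕ} {u : E × ℕ → ℝ} :
    WithinWindow δ (selectedLabels F σ) u ↔ WithinWindow δ F fun f => u (f, σ f) := by
  simp [WithinWindow, selectedLabels]

lemma card_selectedLabels (F : Finset E) (σ : E → ℕ) : (selectedLabels F σ).card = F.card :=
  Finset.card_image_of_injective _ fun _ _ h => congrArg Prod.fst h

lemma disjoint_selectedLabels_filter (F G : Finset E) (σ τ : E → ℕ) :
    Disjoint (selectedLabels F σ) (selectedLabels (G.filter fun f => f ∈ F → σ f ≠ τ f) τ) := by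
  simp only [selectedLabels, Finset.disjoint_left, Finset.mem_image, Finset.mem_filter]
  rintro _ ⟨f, hf, rfl⟩ ⟨g, ⟨-, hg⟩, hgf⟩
  obtain ⟨rfl, hτ⟩ := Prod.mk.inj hgf
  exact hg hf hτ.symm

/-- Discarding from the second selection the labels shared with the first one makes the two window
events independent. -/
lemma infinitePi_unif01_withinWindow_selection_inter_le (hδ : 0 < δ) (hδ1 : δ ≤ 1)
    (F G : Finset E) (σ τ : E → ℕ) :
    Measure.infinitePi (fun _ : E × ℕ => unif01)
        ({u | WithinWindow δ F fun f => u (f, σ f)} ∩ {u | WithinWindow δ G fun f => u (f, τ f)})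
      ≤ ENNReal.ofReal (windowFactor δ F.card * windowFactor δ G.card *
          (δ ^ F.card * δ ^ (G.filter fun f => f ∈ F → σ f ≠ τ f).card)) := by
  set G' := G.filter fun f => f ∈ F → σ f ≠ τ f
  have subset : {u : E × ℕ → ℝ | WithinWindow δ F fun f => u (f, σ f)} ∩
      {u | WithinWindow δ G fun f => u (f, τ f)} ⊆
      {u | WithinWindow δ (selectedLabels F σ) u} ∩ {u | WithinWindow δ (selectedLabels G' τ) u} :=
    fun u hu => ⟨withinWindow_selectedLabels.2 hu.1,
      withinWindow_selectedLabels.2 (hu.2.mono (Finset.filter_subset _ _))⟩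
  refine (measure_mono subset).trans ((infinitePi_unif01_withinWindow_inter_le hδ hδ1
    (disjoint_selectedLabels_filter F G σ τ)).trans (ENNReal.ofReal_le_ofReal ?_))
  simp only [card_selectedLabels]
  have := windowFactor_nonneg hδ hδ1 F.card
  gcongr
  exact windowFactor_mono hδ hδ1 (Finset.card_filter_le _ _)

lemma sum_sum_label_eq_overlapWeight (δ : ℝ) (p q : Prop) [Decidable p] [Decidable q] (k : ℕ) :
    ∑ i ∈ if p then Finset.range k else {0}, ∑ j ∈ if q then Finset.range k else {0},
        (if p then δ else 1) * (if q ∧ (p → i ≠ j) then δ else 1) = overlapWeight δ p q k := by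
  have distinct (i : ℕ) (hi : i ∈ Finset.range k) :
      ∑ j ∈ Finset.range k, (if i ≠ j then δ else 1) = δ * k + (1 - δ) := by
    have (j : ℕ) : (if i ≠ j then δ else 1) = δ + if i = j then 1 - δ else 0 := by
      split_ifs <;> simp_all
    simp_rw [this, Finset.sum_add_distrib, Finset.sum_ite_eq, if_pos hi]
    simp [mul_comm]
  by_cases hp : p <;> by_cases hq : q
  · simp only [hp, hq, overlapWeight, if_true, true_and, true_implies, ← Finset.mul_sum]
    rw [Finset.sum_congr rfl distinct]
    simp only [Finset.sum_const, Finset.card_range, nsmul_eq_mul]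
    ring
  all_goals simp [hp, hq, overlapWeight, mul_comm]

variable [Fintype E]

lemma lt_of_mem_labelChoices {F : Finset E} {l σ : E → ℕ} (hσ : σ ∈ labelChoices F l) {f : E}
    (hf : f ∈ F) : σ f < l f := by
  simpa [hf] using Fintype.mem_piFinset.1 hσ f

lemma sum_labelChoices_eq_prod_overlapWeight (δ : ℝ) (F G : Finset E) (l : E → ℕ) :
    ∑ σ ∈ labelChoices F l, ∑ τ ∈ labelChoices G l,
        δ ^ F.card * δ ^ (G.filter fun f => f ∈ F → σ f ≠ τ f).card
      = ∏ f, overlapWeight δ (f ∈ F) (f ∈ G) (l f) := by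
  have pow_eq_prod (σ τ : E → ℕ) :
      δ ^ F.card * δ ^ (G.filter fun f => f ∈ F → σ f ≠ τ f).card =
        ∏ f, (if f ∈ F then δ else 1) * (if f ∈ G ∧ (f ∈ F → σ f ≠ τ f) then δ else 1) := by
    simp only [Finset.prod_mul_distrib, Finset.prod_ite, Finset.prod_const, one_pow, mul_one,
      ← Finset.filter_filter, Finset.filter_univ_mem]
  simp_rw [pow_eq_prod, ← sum_sum_label_eq_overlapWeight, Finset.prod_univ_sum, labelChoices]

open Classical in
lemma lintegral_card_mul_card_withinWindow_le (hδ : 0 < δ) (hδ1 : δ ≤ 1) (F G : Finset E)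
    (l : E → ℕ) :
    ∫⁻ u, (((labelChoices F l).filter fun σ => WithinWindow δ F fun f => u (f, σ f)).card : ℝ≥0∞) *
        ((labelChoices G l).filter fun τ => WithinWindow δ G fun f => u (f, τ f)).card
        ∂(Measure.infinitePi fun _ : E × ℕ => unif01)
      ≤ ENNReal.ofReal (windowFactor δ F.card * windowFactor δ G.card *
          ∏ f, overlapWeight δ (f ∈ F) (f ∈ G) (l f)) := by
  have measurableSet (F : Finset E) (σ : E → ℕ) :
      MeasurableSet {u : E × ℕ → ℝ | WithinWindow δ F fun f => u (f, σ f)} :=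
    measurableSet_withinWindow F fun f => measurable_pi_apply (f, σ f)
  have := mul_nonneg (windowFactor_nonneg hδ hδ1 F.card) (windowFactor_nonneg hδ hδ1 G.card)
  rw [lintegral_card_filter_mul_card_filter _ _ _ (measurableSet F) (measurableSet G),
    ← sum_labelChoices_eq_prod_overlapWeight, Finset.mul_sum,
    ENNReal.ofReal_sum_of_nonneg fun σ _ => by positivity]
  refine Finset.sum_le_sum fun σ _ => ?_
  rw [Finset.mul_sum, ENNReal.ofReal_sum_of_nonneg fun τ _ => by positivity]
  exact Finset.sum_le_sum fun τ _ =>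
    infinitePi_unif01_withinWindow_selection_inter_le hδ hδ1 F G σ τ

end Selections

/-- The factor by which the bound on the joint second moment grows with each edge on which two
selections of labels overlap. -/
def overlapRatio (ψ : Measure ℕ) (δ : ℝ) : ℝ :=
  (δ * lmdSq ψ + lmdMean ψ - δ * lmdMean ψ) / (δ * lmdMean ψ ^ 2)

section OverlapMoments

variable {ψ : Measure ℕ} {δ : ℝ} {p q : Prop} [Decidable p] [Decidable q]

lemma lmdMean_nonneg : 0 ≤ lmdMean ψ :=
  integral_nonneg fun k => k.cast_nonneg

lemma overlapRatio_nonneg (hδ : 0 < δ) (hδ1 : δ ≤ 1) : 0 ≤ overlapRatio ψ δ := by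
  have hmean : 0 ≤ lmdMean ψ := lmdMean_nonneg
  have hsq : 0 ≤ lmdSq ψ := integral_nonneg fun k => by positivity
  have : 0 ≤ δ * lmdSq ψ + lmdMean ψ - δ * lmdMean ψ := by
    linarith [mul_nonneg hδ.le hsq, mul_nonneg (sub_nonneg.2 hδ1) hmean]
  unfold overlapRatio
  positivity

lemma overlapWeight_nonneg (hδ : 0 < δ) (hδ1 : δ ≤ 1) (k : ℕ) : 0 ≤ overlapWeight δ p q k := by
  have : 0 ≤ 1 - δ := sub_nonneg.2 hδ1
  unfold overlapWeight
  split_ifs <;> positivity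

lemma integrable_overlapWeight (hψ : IsLMD ψ) : Integrable (overlapWeight δ p q) ψ := by
  obtain ⟨_, hmean, hsq, -⟩ := hψ
  unfold overlapWeight
  by_cases hp : p <;> by_cases hq : q <;> simp only [hp, hq, and_self, or_self, or_false, or_true,
    and_true, and_false, if_true, if_false]
  · exact ((hsq.const_mul δ).add (hmean.const_mul (1 - δ))).const_mul δ
  · exact hmean.const_mul δ
  · exact hmean.const_mul δ
  · exact integrable_const 1

lemma integral_overlapWeight (hψ : IsLMD ψ) (hδ : 0 < δ) :
    ∫ k, overlapWeight δ p q k ∂ψ = (if p then δ * lmdMean ψ else 1) *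
      (if q then δ * lmdMean ψ else 1) * (if p ∧ q then overlapRatio ψ δ else 1) := by
  have hr : 0 < lmdMean ψ := hψ.2.2.2
  obtain ⟨_, hmean, hsq, -⟩ := hψ
  have both : ∫ k : ℕ, δ * (δ * (k : ℝ) ^ 2 + (1 - δ) * k) ∂ψ =
      δ * (δ * lmdSq ψ + (1 - δ) * lmdMean ψ) := by
    rw [integral_const_mul, integral_add (hsq.const_mul δ) (hmean.const_mul _),
      integral_const_mul, integral_const_mul, lmdSq, lmdMean]
  have one : ∫ k : ℕ, δ * (k : ℝ) ∂ψ = δ * lmdMean ψ := integral_const_mul _ _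
  by_cases hp : p <;> by_cases hq : q <;> simp only [overlapWeight, hp, hq, and_self, or_self,
    or_false, or_true, and_true, and_false, if_true, if_false, both, one, one_mul, mul_one]
  · rw [overlapRatio]
    field_simp
    ring
  · simp

lemma lintegral_prod_overlapWeight {E : Type*} [Fintype E] [DecidableEq E] (hψ : IsLMD ψ)
    (hδ : 0 < δ) (hδ1 : δ ≤ 1) (F G : Finset E) :
    ∫⁻ l : E → ℕ, ENNReal.ofReal (∏ f, overlapWeight δ (f ∈ F) (f ∈ G) (l f))
        ∂(Measure.pi fun _ => ψ)
      = ENNReal.ofReal ((δ * lmdMean ψ) ^ F.card * (δ * lmdMean ψ) ^ G.card *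
          overlapRatio ψ δ ^ (F ∩ G).card) := by
  have := hψ.1
  rw [← ofReal_integral_eq_lintegral_ofReal
    (Integrable.fintype_prod fun _ => integrable_overlapWeight hψ)
    (.of_forall fun l => Finset.prod_nonneg fun f _ => overlapWeight_nonneg hδ hδ1 (l f)),
    integral_fintype_prod_eq_prod]
  simp only [integral_overlapWeight hψ hδ, Finset.prod_mul_distrib, ← Finset.mem_inter,
    Finset.prod_ite_mem, Finset.univ_inter, Finset.prod_const, mul_pow]

end OverlapMoments

section Coupling

lemma measurable_sigma_iff {ι β : Type*} {X : ι → Type*} [∀ i, MeasurableSpace (X i)]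
    [MeasurableSpace β] {g : (Σ i, X i) → β} : Measurable g ↔ ∀ i, Measurable (g ∘ Sigma.mk i) :=
  ⟨fun h i _ hs => MeasurableSpace.measurableSet_iInf.1 (h hs) i,
    fun h _ hs => MeasurableSpace.measurableSet_iInf.2 fun i => h i hs⟩

lemma measurable_sigmaMk_s15 {ι : Type*} {X : ι → Type*} [∀ i, MeasurableSpace (X i)] (i : ι) :
    Measurable (Sigma.mk i : X i → Σ i, X i) :=
  measurable_sigma_iff.1 measurable_id i

/-- The first `p.1` terms of the sequence `p.2`. -/
def truncate (p : ℕ × (ℕ → ℝ)) : LabelSpace := ⟨p.1, fun i => p.2 i⟩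

lemma measurable_truncate : Measurable truncate :=
  measurable_from_prod_countable_right fun k =>
    (measurable_sigmaMk_s15 k).comp
      (measurable_pi_lambda _ fun _ => measurable_pi_apply _)

variable {ν : Measure ℝ} [IsProbabilityMeasure ν] {ψ : Measure ℕ}

lemma edgeMeasure_eq_map_truncate :
    edgeMeasure ν ψ = (ψ.prod (Measure.infinitePi fun _ => ν)).map truncate := by
  have map_prefix (k : ℕ) : (Measure.infinitePi fun _ : ℕ => ν).map (fun u (i : Fin k) => u i) =
      Measure.pi fun _ => ν := by
    have prefix_indep := (iIndepFun_infinitePi (P := fun _ : ℕ => ν) (X := fun _ => id)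
      fun _ => measurable_id).precomp (Fin.val_injective (n := k))
    refine ((iIndepFun_iff_map_fun_eq_pi_map
      fun _ => (measurable_pi_apply _).aemeasurable).1 prefix_indep).trans ?_
    simp [Measure.infinitePi_map_eval]
  conv_rhs => rw [← Measure.sum_smul_dirac ψ]
  rw [Measure.prod_sum_left, Measure.map_sum measurable_truncate.aemeasurable, edgeMeasure]
  congr 1 with k : 1
  rw [Measure.prod_smul_left, Measure.map_smul, Measure.dirac_prod,
    Measure.map_map measurable_truncate (by fun_prop), ← map_prefix,
    Measure.map_map (measurable_sigmaMk_s15 k) (by fun_prop)]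
  rfl

variable [IsProbabilityMeasure ψ]

instance : IsProbabilityMeasure (edgeMeasure ν ψ) := by
  rw [edgeMeasure_eq_map_truncate]
  exact Measure.isProbabilityMeasure_map measurable_truncate.aemeasurable

variable {V : Type*}

/-- The sample with `l f` labels on each edge `f`, the `i`-th of which is `u (f, i)`. -/
def sampleOf (l : Sym2 V → ℕ) (u : Sym2 V × ℕ → ℝ) : Sym2 V → LabelSpace :=
  fun f => truncate (l f, fun i => u (f, i))

lemma measurable_sampleOf :
    Measurable fun p : (Sym2 V → ℕ) × (Sym2 V × ℕ → ℝ) => sampleOf p.1 p.2 :=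
  measurable_pi_lambda _ fun _ => measurable_truncate.comp (by fun_prop)

variable [Fintype V] [DecidableEq V]

instance : IsProbabilityMeasure (model V ν ψ) := by
  unfold model
  infer_instance

lemma model_eq_map_sampleOf :
    model V ν ψ = ((Measure.pi fun _ => ψ).prod (Measure.infinitePi fun _ => ν)).map
      fun p => sampleOf p.1 p.2 := by
  have curry : MeasurePreserving (MeasurableEquiv.curry (Sym2 V) ℕ ℝ)
      (Measure.infinitePi fun _ => ν) (Measure.pi fun _ => Measure.infinitePi fun _ => ν) :=
    ⟨MeasurableEquiv.measurable _,
      (Measure.infinitePi_map_curry fun _ _ => ν).trans (Measure.infinitePi_eq_pi _)⟩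
  have zip := ((measurePreserving_arrowProdEquivProdArrow ℕ (ℕ → ℝ) (Sym2 V) (fun _ => ψ)
    fun _ => Measure.infinitePi fun _ => ν).symm).comp
      ((MeasurePreserving.id (Measure.pi fun _ : Sym2 V => ψ)).prod curry)
  have := Measure.isProbabilityMeasure_map (μ := ψ.prod (Measure.infinitePi fun _ : ℕ => ν))
    measurable_truncate.aemeasurable
  rw [model, edgeMeasure_eq_map_truncate,
    ← Measure.pi_map_pi fun _ => measurable_truncate.aemeasurable, ← zip.map_eq]
  exact Measure.map_map (measurable_pi_lambda _ fun f =>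
    measurable_truncate.comp (measurable_pi_apply f)) zip.measurable

end Coupling

/-- Bounds the joint second moment of the numbers of occurrences on the edges in `F` and `G`. -/
def jointMomentBound {E : Type*} [DecidableEq E] (ψ : Measure ℕ) (δ : ℝ) (F G : Finset E) : ℝ :=
  windowFactor δ F.card * windowFactor δ G.card *
    ((δ * lmdMean ψ) ^ F.card * (δ * lmdMean ψ) ^ G.card * overlapRatio ψ δ ^ (F ∩ G).card)

lemma jointMomentBound_nonneg {E : Type*} [DecidableEq E] {ψ : Measure ℕ} {δ : ℝ} (hδ : 0 < δ)
    (hδ1 : δ ≤ 1) (F G : Finset E) : 0 ≤ jointMomentBound ψ δ F G := by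
  have := lmdMean_nonneg (ψ := ψ)
  have := overlapRatio_nonneg (ψ := ψ) hδ hδ1
  unfold jointMomentBound
  exact mul_nonneg (mul_nonneg (windowFactor_nonneg hδ hδ1 _) (windowFactor_nonneg hδ hδ1 _))
    (by positivity)

section Occurrences

variable {V : Type*}

lemma measurable_labVal (f : Sym2 V) (j : ℕ) :
    Measurable fun ω : Sym2 V → LabelSpace => labVal ω f j := by
  have : Measurable fun x : LabelSpace => if h : j < x.1 then x.2 ⟨j, h⟩ else 0 := by
    refine measurable_sigma_iff.2 fun k => ?_
    by_cases h : j < k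
    · simpa [Function.comp_def, h] using measurable_pi_apply (⟨j, h⟩ : Fin k)
    · simp [Function.comp_def, h]
  exact this.comp (measurable_pi_apply f)

lemma labVal_congr {ω ω' : Sym2 V → LabelSpace} {f : Sym2 V} (h : ω f = ω' f) (j : ℕ) :
    labVal ω f j = labVal ω' f j := by
  unfold labVal
  rw [h]

lemma labVal_sampleOf {l : Sym2 V → ℕ} {f : Sym2 V} {j : ℕ} (u : Sym2 V × ℕ → ℝ) (h : j < l f) :
    labVal (sampleOf l u) f j = u (f, j) :=
  dif_pos h

/-- The labels of `ω` selected by `σ` on the edges in `F` fit into an interval of length `δ` and are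
ordered as prescribed by `Q`. -/
def IsOrderedWithinWindow (F : Finset (Sym2 V)) (Q : Sym2 V → Sym2 V → Prop) (δ : ℝ)
    (ω : Sym2 V → LabelSpace) (σ : Sym2 V → ℕ) : Prop :=
  (WithinWindow δ F fun f => labVal ω f (σ f)) ∧
    ∀ e ∈ F, ∀ f ∈ F, Q e f → labVal ω e (σ e) < labVal ω f (σ f)

variable {F G : Finset (Sym2 V)} {Q R : Sym2 V → Sym2 V → Prop} {δ : ℝ}

lemma measurableSet_isOrderedWithinWindow (σ : Sym2 V → ℕ) :
    MeasurableSet {ω | IsOrderedWithinWindow F Q δ ω σ} := by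
  simp only [IsOrderedWithinWindow, Set.ofPred_and, Set.ofPred_forall]
  exact (measurableSet_withinWindow F fun f => measurable_labVal f (σ f)).inter <|
    F.measurableSet_biInter fun e _ => F.measurableSet_biInter fun f _ => .iInter fun _ =>
      measurableSet_lt (measurable_labVal _ _) (measurable_labVal _ _)

variable [Fintype V] [DecidableEq V]

open Classical in
/-- The selections of one label for each edge in `F` that fit into an interval of length `δ` and are
ordered as prescribed by `Q`. -/
def occurrences (F : Finset (Sym2 V)) (Q : Sym2 V → Sym2 V → Prop) (δ : ℝ)
    (ω : Sym2 V → LabelSpace) : Finset (Sym2 V → ℕ) :=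
  (labelChoices F fun f => (ω f).1).filter (IsOrderedWithinWindow F Q δ ω)

lemma mem_occurrences {ω : Sym2 V → LabelSpace} {σ : Sym2 V → ℕ} :
    σ ∈ occurrences F Q δ ω ↔ (∀ f ∉ F, σ f = 0) ∧ (∀ f ∈ F, σ f < (ω f).1) ∧
      IsOrderedWithinWindow F Q δ ω σ := by
  have choice_iff (f : Sym2 V) : σ f ∈ (if f ∈ F then Finset.range (ω f).1 else {0}) ↔
      (f ∉ F → σ f = 0) ∧ (f ∈ F → σ f < (ω f).1) := by
    by_cases hf : f ∈ F <;> simp [hf]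
  simp only [occurrences, labelChoices, Finset.mem_filter, Fintype.mem_piFinset, choice_iff,
    forall_and, and_assoc]

open Classical in
lemma measurable_card_occurrences {β : Type*} [MeasurableSpace β] [NatCast β] :
    Measurable fun ω => ((occurrences F Q δ ω).card : β) := by
  have uncurried : Measurable fun p : (Sym2 V → ℕ) × (Sym2 V → LabelSpace) =>
      ((labelChoices F p.1).filter (IsOrderedWithinWindow F Q δ p.2)).card := by
    refine measurable_from_prod_countable_right fun l => ?_
    simp only [Finset.card_filter]
    exact Finset.measurable_sum _ fun σ _ =>
      Measurable.ite (measurableSet_isOrderedWithinWindow σ) measurable_const measurable_const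
  have multiplicities : Measurable fun (ω : Sym2 V → LabelSpace) f => (ω f).1 :=
    measurable_pi_lambda _ fun f =>
      (measurable_sigma_iff.2 fun _ => measurable_const).comp (measurable_pi_apply f)
  have nat_valued : Measurable fun ω => (occurrences F Q δ ω).card := by
    simpa only [occurrences, Function.comp_def, id] using
      uncurried.comp (multiplicities.prodMk measurable_id)
  exact (measurable_from_nat (f := (Nat.cast : ℕ → β))).comp nat_valued

lemma dependsOn_occurrences : DependsOn (occurrences F Q δ) F := by
  classical
  intro ω ω' h
  have choices_eq : (labelChoices F fun f => (ω f).1) = labelChoices F fun f => (ω' f).1 := by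
    unfold labelChoices
    congr 1 with f : 1
    exact if_ctx_congr Iff.rfl (fun hf => congrArg (fun x => Finset.range x.1) (h f hf))
      fun _ => rfl
  unfold occurrences
  rw [choices_eq]
  refine Finset.filter_congr fun σ _ => and_congr ?_ ?_ <;>
    exact forall₄_congr fun e he f hf => by
      simp only [labVal_congr (h e he), labVal_congr (h f hf)]

open Classical in
lemma occurrences_sampleOf_subset (l : Sym2 V → ℕ) (u : Sym2 V × ℕ → ℝ) :
    occurrences F Q δ (sampleOf l u) ⊆
      (labelChoices F l).filter fun σ => WithinWindow δ F fun f => u (f, σ f) := by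
  intro σ hσ
  obtain ⟨hσ, hwindow, -⟩ := Finset.mem_filter.1 hσ
  refine Finset.mem_filter.2 ⟨hσ, fun e he f hf => ?_⟩
  simpa only [labVal_sampleOf u (lt_of_mem_labelChoices hσ he),
    labVal_sampleOf u (lt_of_mem_labelChoices hσ hf)] using hwindow e he f hf

variable {ψ : Measure ℕ}

lemma lintegral_card_occurrences_mul_le (hψ : IsLMD ψ) (hδ : 0 < δ) (hδ1 : δ ≤ 1) :
    ∫⁻ ω, ((occurrences F Q δ ω).card : ℝ≥0∞) * (occurrences G R δ ω).card ∂contModel V ψ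
      ≤ ENNReal.ofReal (jointMomentBound ψ δ F G) := by
  have := hψ.1
  have measurable : Measurable fun ω =>
      ((occurrences F Q δ ω).card : ℝ≥0∞) * (occurrences G R δ ω).card :=
    Measurable.mul (f := fun ω => ((occurrences F Q δ ω).card : ℝ≥0∞)) measurable_card_occurrences
      measurable_card_occurrences
  have factors_nonneg : 0 ≤ windowFactor δ F.card * windowFactor δ G.card :=
    mul_nonneg (windowFactor_nonneg hδ hδ1 _) (windowFactor_nonneg hδ hδ1 _)
  calc ∫⁻ ω, ((occurrences F Q δ ω).card : ℝ≥0∞) * (occurrences G R δ ω).card ∂contModel V ψ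
      = ∫⁻ l, ∫⁻ u, ((occurrences F Q δ (sampleOf l u)).card : ℝ≥0∞) *
          (occurrences G R δ (sampleOf l u)).card
          ∂(Measure.infinitePi fun _ => unif01) ∂(Measure.pi fun _ => ψ) := by
        rw [contModel, model_eq_map_sampleOf, lintegral_map measurable measurable_sampleOf]
        exact lintegral_prod _ (measurable.comp measurable_sampleOf).aemeasurable
    _ ≤ ∫⁻ l : Sym2 V → ℕ, ENNReal.ofReal (windowFactor δ F.card * windowFactor δ G.card *
          ∏ f, overlapWeight δ (f ∈ F) (f ∈ G) (l f)) ∂(Measure.pi fun _ => ψ) := by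
        refine lintegral_mono fun l => le_trans (lintegral_mono fun u => ?_)
          (lintegral_card_mul_card_withinWindow_le hδ hδ1 F G l)
        gcongr <;> exact occurrences_sampleOf_subset l u
    _ = ENNReal.ofReal (jointMomentBound ψ δ F G) := by
        simp only [ENNReal.ofReal_mul factors_nonneg, jointMomentBound]
        rw [lintegral_const_mul' _ _ ENNReal.ofReal_ne_top, lintegral_prod_overlapWeight hψ hδ hδ1]

lemma integrable_card_occurrences_mul (hψ : IsLMD ψ) (hδ : 0 < δ) (hδ1 : δ ≤ 1) :
    Integrable (fun ω => ((occurrences F Q δ ω).card : ℝ) * (occurrences G R δ ω).card)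
      (contModel V ψ) := by
  refine ⟨(measurable_card_occurrences.mul measurable_card_occurrences).aestronglyMeasurable, ?_⟩
  simpa [HasFiniteIntegral, enorm_mul] using
    (lintegral_card_occurrences_mul_le hψ hδ hδ1).trans_lt ENNReal.ofReal_lt_top

lemma memLp_two_card_occurrences (hψ : IsLMD ψ) (hδ : 0 < δ) (hδ1 : δ ≤ 1) :
    MemLp (fun ω => ((occurrences F Q δ ω).card : ℝ)) 2 (contModel V ψ) := by
  refine (memLp_two_iff_integrable_sq measurable_card_occurrences.aestronglyMeasurable).2 ?_
  simpa only [sq] using integrable_card_occurrences_mul hψ hδ hδ1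

lemma covariance_card_occurrences_eq_zero (hψ : IsLMD ψ) (hδ : 0 < δ) (hδ1 : δ ≤ 1)
    (hFG : Disjoint F G) :
    cov[fun ω => ((occurrences F Q δ ω).card : ℝ), fun ω => ((occurrences G R δ ω).card : ℝ);
      contModel V ψ] = 0 := by
  have := hψ.1
  have indep : IndepFun (fun ω => ((occurrences F Q δ ω).card : ℝ))
      (fun ω => ((occurrences G R δ ω).card : ℝ)) (contModel V ψ) := by
    rw [contModel, model, ← Measure.infinitePi_eq_pi]
    exact indepFun_infinitePi_of_dependsOn measurable_card_occurrences measurable_card_occurrences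
      (fun _ _ h => by rw [dependsOn_occurrences h]) (fun _ _ h => by rw [dependsOn_occurrences h])
      hFG
  exact indep.covariance_eq_zero (memLp_two_card_occurrences hψ hδ hδ1)
    (memLp_two_card_occurrences hψ hδ hδ1)

lemma covariance_card_occurrences_le (hψ : IsLMD ψ) (hδ : 0 < δ) (hδ1 : δ ≤ 1) :
    cov[fun ω => ((occurrences F Q δ ω).card : ℝ), fun ω => ((occurrences G R δ ω).card : ℝ);
      contModel V ψ] ≤ jointMomentBound ψ δ F G := by
  have := hψ.1
  have moment_le : ∫ ω, ((occurrences F Q δ ω).card : ℝ) * (occurrences G R δ ω).card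
      ∂contModel V ψ ≤ jointMomentBound ψ δ F G := by
    rw [integral_eq_lintegral_of_nonneg_ae (.of_forall fun ω => by positivity)
      (integrable_card_occurrences_mul hψ hδ hδ1).aestronglyMeasurable]
    refine ENNReal.toReal_le_of_le_ofReal (jointMomentBound_nonneg hδ hδ1 F G) ?_
    simpa [ENNReal.ofReal_mul] using lintegral_card_occurrences_mul_le hψ hδ hδ1
  rw [covariance_eq_sub (memLp_two_card_occurrences hψ hδ hδ1)
    (memLp_two_card_occurrences hψ hδ hδ1)]
  have : 0 ≤ (∫ ω, ((occurrences F Q δ ω).card : ℝ) ∂contModel V ψ) *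
      ∫ ω, ((occurrences G R δ ω).card : ℝ) ∂contModel V ψ := by positivity
  simp only [Pi.mul_apply]
  linarith

end Occurrences

section Motifs

variable {VH : Type*} [Finite VH] {n : ℕ} {H : SimpleGraph VH} {P : Sym2 VH → Sym2 VH → Prop}
  {δ : ℝ}

/-- The edges of the copy of `H` in `K_n` given by the vertex map `φ`. -/
def imageEdges (H : SimpleGraph VH) (φ : VH → Fin n) : Finset (Sym2 (Fin n)) :=
  (Set.toFinite (Sym2.map φ '' H.edgeSet)).toFinset

lemma coe_imageEdges (φ : VH → Fin n) : (imageEdges H φ : Set (Sym2 (Fin n))) =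
    Sym2.map φ '' H.edgeSet :=
  Set.Finite.coe_toFinset _

lemma card_imageEdges {φ : VH → Fin n} (hφ : Function.Injective φ) :
    (imageEdges H φ).card = H.edgeSet.ncard := by
  rw [← Set.ncard_coe_finset, coe_imageEdges,
    Set.ncard_image_of_injective _ (Sym2.map.injective hφ)]

lemma coe_imageEdges_inter (φ₁ φ₂ : VH → Fin n) :
    ((imageEdges H φ₁ ∩ imageEdges H φ₂ : Finset (Sym2 (Fin n))) : Set (Sym2 (Fin n))) =
      sharedEdges H φ₁ φ₂ := by
  rw [Finset.coe_inter, coe_imageEdges, coe_imageEdges, sharedEdges]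

lemma map_mem_imageEdges {φ : VH → Fin n} (hφ : Function.Injective φ) {e : Sym2 VH} :
    Sym2.map φ e ∈ imageEdges H φ ↔ e ∈ H.edgeSet := by
  rw [← Finset.mem_coe, coe_imageEdges, (Sym2.map.injective hφ).mem_set_image]

lemma forall_mem_imageEdges {φ : VH → Fin n} {p : Sym2 (Fin n) → Prop} :
    (∀ f ∈ imageEdges H φ, p f) ↔ ∀ e ∈ H.edgeSet, p (Sym2.map φ e) := by
  simp only [← Finset.mem_coe, coe_imageEdges, Set.forall_mem_image]

/-- The number of occurrences of `(H, P)` on the copy of `H` given by the vertex map `φ`. -/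
def copyCount (H : SimpleGraph VH) (P : Sym2 VH → Sym2 VH → Prop) (δ : ℝ) (φ : VH → Fin n)
    (ω : Sym2 (Fin n) → LabelSpace) : ℝ :=
  (occurrences (imageEdges H φ) (Relation.Map P (Sym2.map φ) (Sym2.map φ)) δ ω).card

lemma mem_motifOcc_comp_map (hP : ∀ e f, P e f → e ∈ H.edgeSet ∧ f ∈ H.edgeSet)
    {φ : VH → Fin n} (hφ : Function.Injective φ) {ω : Sym2 (Fin n) → LabelSpace}
    {σ : Sym2 (Fin n) → ℕ} (hσ : ∀ f ∉ imageEdges H φ, σ f = 0) :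
    (φ, σ ∘ Sym2.map φ) ∈ motifOcc H P δ ω ↔
      σ ∈ occurrences (imageEdges H φ) (Relation.Map P (Sym2.map φ) (Sym2.map φ)) δ ω := by
  have order_iff : (∀ e f, P e f → labVal ω (Sym2.map φ e) (σ (Sym2.map φ e)) <
        labVal ω (Sym2.map φ f) (σ (Sym2.map φ f))) ↔
      ∀ e ∈ H.edgeSet, ∀ f ∈ H.edgeSet,
        Relation.Map P (Sym2.map φ) (Sym2.map φ) (Sym2.map φ e) (Sym2.map φ f) →
        labVal ω (Sym2.map φ e) (σ (Sym2.map φ e)) <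
          labVal ω (Sym2.map φ f) (σ (Sym2.map φ f)) := by
    simp only [Relation.map_apply_apply (Sym2.map.injective hφ) (Sym2.map.injective hφ)]
    exact ⟨fun h e _ f _ => h e f, fun h e f hef => h e (hP e f hef).1 f (hP e f hef).2 hef⟩
  have vanishes : ∀ e ∉ H.edgeSet, σ (Sym2.map φ e) = 0 := fun e he =>
    hσ _ fun h => he ((map_mem_imageEdges hφ).1 h)
  simp only [motifOcc, mem_ofPred_eq, mem_occurrences, IsOrderedWithinWindow, WithinWindow,
    forall_mem_imageEdges, Function.comp_apply, order_iff]
  exact ⟨fun h => ⟨hσ, h.2.2⟩, fun h => ⟨hφ, vanishes, h.2⟩⟩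

lemma injOn_comp_map_occurrences (φ : VH → Fin n) {Q : Sym2 (Fin n) → Sym2 (Fin n) → Prop}
    (ω : Sym2 (Fin n) → LabelSpace) :
    Set.InjOn (· ∘ Sym2.map φ) (occurrences (imageEdges H φ) Q δ ω : Set (Sym2 (Fin n) → ℕ)) := by
  intro σ hσ τ hτ hστ
  ext f
  by_cases hf : f ∈ imageEdges H φ
  · obtain ⟨e, -, rfl⟩ := (coe_imageEdges (H := H) φ).subset hf
    exact congrFun hστ e
  · rw [(mem_occurrences.1 hσ).1 f hf, (mem_occurrences.1 hτ).1 f hf]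

lemma image_comp_map_occurrences (hP : ∀ e f, P e f → e ∈ H.edgeSet ∧ f ∈ H.edgeSet)
    {φ : VH → Fin n} (hφ : Function.Injective φ) (ω : Sym2 (Fin n) → LabelSpace) :
    (· ∘ Sym2.map φ) '' (occurrences (imageEdges H φ)
        (Relation.Map P (Sym2.map φ) (Sym2.map φ)) δ ω : Set (Sym2 (Fin n) → ℕ)) =
      {τ | (φ, τ) ∈ motifOcc H P δ ω} := by
  refine Set.Subset.antisymm (Set.image_subset_iff.2 fun σ hσ => ?_) fun τ hτ => ?_
  · exact (mem_motifOcc_comp_map hP hφ (mem_occurrences.1 hσ).1).2 hσ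
  · have map_injective := Sym2.map.injective hφ
    have extend_comp : Function.extend (Sym2.map φ) τ 0 ∘ Sym2.map φ = τ :=
      funext fun e => map_injective.extend_apply τ 0 e
    have vanishes : ∀ f ∉ imageEdges H φ, Function.extend (Sym2.map φ) τ 0 f = 0 := by
      intro f hf
      by_cases hmap : ∃ e, Sym2.map φ e = f
      · obtain ⟨e, rfl⟩ := hmap
        rw [map_injective.extend_apply]
        exact hτ.2.1 e fun he => hf ((map_mem_imageEdges hφ).2 he)
      · exact Function.extend_apply' _ _ _ hmap
    refine ⟨_, ?_, extend_comp⟩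
    rwa [Finset.mem_coe, ← mem_motifOcc_comp_map hP hφ vanishes, extend_comp]

open Classical in
lemma ncard_motifOcc [Fintype (VH → Fin n)]
    (hP : ∀ e f, P e f → e ∈ H.edgeSet ∧ f ∈ H.edgeSet) (ω : Sym2 (Fin n) → LabelSpace) :
    ((motifOcc H P δ ω).ncard : ℝ) =
      ∑ φ : VH → Fin n with Function.Injective φ, copyCount H P δ φ ω := by
  set occ : (VH → Fin n) → Finset (Sym2 (Fin n) → ℕ) := fun φ =>
    occurrences (imageEdges H φ) (Relation.Map P (Sym2.map φ) (Sym2.map φ)) δ ω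
  have motifOcc_eq : motifOcc H P δ ω = (fun p => (p.1, p.2 ∘ Sym2.map p.1)) ''
      ((Finset.univ.filter Function.Injective).sigma occ : Set (Σ _, Sym2 (Fin n) → ℕ)) := by
    ext ⟨φ, τ⟩
    constructor
    · intro hτ
      obtain ⟨σ, hσ, hστ⟩ := (image_comp_map_occurrences hP hτ.1 ω).superset hτ
      exact ⟨⟨φ, σ⟩, Finset.mem_sigma.2 ⟨(Finset.mem_filter_univ _).2 hτ.1, hσ⟩, Prod.ext rfl hστ⟩
    · rintro ⟨⟨φ, σ⟩, hσ, ⟨⟩⟩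
      obtain ⟨hφ, hσ⟩ := Finset.mem_sigma.1 hσ
      exact (image_comp_map_occurrences hP ((Finset.mem_filter_univ _).1 hφ) ω).subset ⟨σ, hσ, rfl⟩
  rw [motifOcc_eq, Set.InjOn.ncard_image, Set.ncard_coe_finset, Finset.card_sigma, Nat.cast_sum]
  · rfl
  · rintro ⟨φ, σ⟩ hσ ⟨φ', τ⟩ hτ h
    obtain ⟨rfl, hστ⟩ : φ = φ' ∧ σ ∘ Sym2.map φ = τ ∘ Sym2.map φ' := Prod.mk.inj h
    exact Sigma.ext rfl <| heq_of_eq <|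
      injOn_comp_map_occurrences φ ω (Finset.mem_sigma.1 hσ).2 (Finset.mem_sigma.1 hτ).2 hστ

end Motifs

section Variance

variable {VH : Type*} [Finite VH] {n : ℕ} {H : SimpleGraph VH} {P : Sym2 VH → Sym2 VH → Prop}
  {ψ : Measure ℕ} {δ : ℝ} {φ₁ φ₂ : VH → Fin n}

lemma memLp_two_copyCount (hψ : IsLMD ψ) (hδ : 0 < δ) (hδ1 : δ ≤ 1) (φ : VH → Fin n) :
    MemLp (copyCount H P δ φ) 2 (contModel (Fin n) ψ) :=
  memLp_two_card_occurrences hψ hδ hδ1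

lemma jointMomentBound_imageEdges (hφ₁ : Function.Injective φ₁) (hφ₂ : Function.Injective φ₂) :
    jointMomentBound ψ δ (imageEdges H φ₁) (imageEdges H φ₂) =
      δ ^ (2 * H.edgeSet.ncard) * lmdMean ψ ^ (2 * H.edgeSet.ncard) *
        windowFactor δ H.edgeSet.ncard ^ 2 *
        overlapRatio ψ δ ^ (sharedEdges H φ₁ φ₂).ncard := by
  rw [jointMomentBound, card_imageEdges hφ₁, card_imageEdges hφ₂, ← coe_imageEdges_inter,
    Set.ncard_coe_finset]
  ring

lemma covariance_copyCount_eq_zero (hψ : IsLMD ψ) (hδ : 0 < δ) (hδ1 : δ ≤ 1)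
    (h : ¬ (sharedEdges H φ₁ φ₂).Nonempty) :
    cov[copyCount H P δ φ₁, copyCount H P δ φ₂; contModel (Fin n) ψ] = 0 := by
  refine covariance_card_occurrences_eq_zero hψ hδ hδ1 ?_
  rwa [Finset.disjoint_iff_inter_eq_empty, ← Finset.not_nonempty_iff_eq_empty,
    ← Finset.coe_nonempty, coe_imageEdges_inter]

end Variance

theorem statement15_general {VH : Type*} [Finite VH] (H : SimpleGraph VH)
    (P : Sym2 VH → Sym2 VH → Prop) (hP : ∀ e f, P e f → e ∈ H.edgeSet ∧ f ∈ H.edgeSet)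
    (ψ : Measure ℕ) (hψ : IsLMD ψ) (δ : ℝ) (hδ : 0 < δ) (hδ1 : δ ≤ 1) (n : ℕ) :
    variance (fun ω => ((motifOcc H P δ ω).ncard : ℝ)) (contModel (Fin n) ψ)
      ≤ δ ^ (2 * H.edgeSet.ncard) * lmdMean ψ ^ (2 * H.edgeSet.ncard)
        * (1 + H.edgeSet.ncard * (1 - δ) / δ) ^ 2
        * ∑ᶠ p ∈ {p : (VH → Fin n) × (VH → Fin n) |
            Function.Injective p.1 ∧ Function.Injective p.2 ∧
              (sharedEdges H p.1 p.2).Nonempty},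
            ((δ * lmdSq ψ + lmdMean ψ - δ * lmdMean ψ) / (δ * lmdMean ψ ^ 2))
              ^ (sharedEdges H p.1 p.2).ncard := by
  classical
  have := hψ.1
  have := Fintype.ofFinite (VH → Fin n)
  set Φ := Finset.univ.filter fun φ : VH → Fin n => Function.Injective φ
  have overlapping_pairs : {p : (VH → Fin n) × (VH → Fin n) | Function.Injective p.1 ∧
      Function.Injective p.2 ∧ (sharedEdges H p.1 p.2).Nonempty} =
      ↑((Φ ×ˢ Φ).filter fun p => (sharedEdges H p.1 p.2).Nonempty) := by
    ext p
    simp [Φ, and_assoc]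
  rw [overlapping_pairs, finsum_mem_coe_finset, Finset.mul_sum, Finset.sum_filter,
    funext fun ω => ncard_motifOcc hP ω,
    variance_fun_sum' fun φ _ => memLp_two_copyCount hψ hδ hδ1 φ, ← Finset.sum_product']
  refine Finset.sum_le_sum fun p hp => ?_
  simp only [Finset.mem_product, Finset.mem_filter_univ] at hp
  split_ifs with hshared
  · exact (covariance_card_occurrences_le hψ hδ hδ1).trans_eq
      (jointMomentBound_imageEdges hp.1 hp.2)
  · exact (covariance_copyCount_eq_zero hψ hδ hδ1 hshared).le

/-- Second-moment upper bound for almost surely bounded label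
multiplicity distributions. -/
theorem statement15 {VH : Type} [Fintype VH] [DecidableEq VH] (H : SimpleGraph VH)
    (hH : 1 ≤ H.edgeSet.ncard)
    (P : Sym2 VH → Sym2 VH → Prop) (hP : StrictPartialOrderOn H.edgeSet P)
    (ψ : Measure ℕ) (hψ : IsLMD ψ) (hbounded : ∃ C : ℕ, ψ {k | C < k} = 0)
    (δ : ℝ) (hδ : 0 < δ) (hδ1 : δ < 1) (n : ℕ) :
    variance (fun ω => ((motifOcc H P δ ω).ncard : ℝ)) (contModel (Fin n) ψ)
      ≤ δ ^ (2 * H.edgeSet.ncard) * lmdMean ψ ^ (2 * H.edgeSet.ncard)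
        * (1 + H.edgeSet.ncard * (1 - δ) / δ) ^ 2
        * ∑ᶠ p ∈ {p : (VH → Fin n) × (VH → Fin n) |
            Function.Injective p.1 ∧ Function.Injective p.2 ∧
              (sharedEdges H p.1 p.2).Nonempty},
            ((δ * lmdSq ψ + lmdMean ψ - δ * lmdMean ψ) / (δ * lmdMean ψ ^ 2))
              ^ (sharedEdges H p.1 p.2).ncard :=
  statement15_general H P hP.2.2 ψ hψ δ hδ hδ1.le n

end RTG
end
end
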